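/- arXiv:2005.01875 — 2 statements merged into one kernel-verified Lean document; each statement's English description precedes it below -/
import Mathlib

section
/- Let P = {P_n : n < ω} be a partition of ω into infinitely many infinite sets with min P_i < min P_j whenever i < j. Then a subset 𝓧 ⊆ 𝓔^P_∞ has the property of Baire with respect to the Ellentuck topology if and only if 𝓧 is Ramsey; moreover, 𝓧 is Ellentuck-meagre if and only if 𝓧 is Ramsey null. (That is, (𝓔^P_∞, ≤, r) is a topological Ramsey space.) -/
open Set

namespace DualRamsey

/-- `F` is a coarsening of `E` (written `F ≤ E` in the paper): every class of `F`
is a union of classes of `E`. -/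
def Coarsens {X : Type*} (F E : Setoid X) : Prop := ∀ a b, E.r a b → F.r a b

/-- The set of equivalence classes of a setoid. -/
def classes {X : Type*} (E : Setoid X) : Set (Set X) := {C | ∃ x, C = {y | E.r x y}}

/-- The set of minimal representatives of the classes of an equivalence relation on ℕ. -/
def minReps (E : Setoid ℕ) : Set ℕ := {n | ∀ m, E.r n m → n ≤ m}

/-- `pRep E k` is `p_k(E)`, the k-th minimal representative in increasing order. -/
noncomputable def pRep (E : Setoid ℕ) (k : ℕ) : ℕ := Nat.nth (· ∈ minReps E) k

/-- `approx n E` is the n-th approximation `r_n(E)`: `E` restricted to `{0,…,p_n(E)-1}`,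
identified with its graph. -/
noncomputable def approx (n : ℕ) (E : Setoid ℕ) : Set (ℕ × ℕ) :=
  {q | q.1 < pRep E n ∧ q.2 < pRep E n ∧ E.r q.1 q.2}

/-- Basic set `[a, E]` relative to a space `S` of equivalence relations. -/
noncomputable def basicSet (S : Set (Setoid ℕ)) (a : Set (ℕ × ℕ)) (E : ↥S) : Set ↥S :=
  {F | Coarsens F.1 E.1 ∧ ∃ n, approx n F.1 = a}

/-- The Ellentuck topology on a space `S` of equivalence relations. -/
noncomputable def ellentuckTop (S : Set (Setoid ℕ)) : TopologicalSpace ↥S :=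
  TopologicalSpace.generateFrom {U | ∃ a E, U = basicSet S a E}

def IsRamsey (S : Set (Setoid ℕ)) (X : Set ↥S) : Prop :=
  ∀ (a : Set (ℕ × ℕ)) (B : ↥S), (basicSet S a B).Nonempty →
    ∃ A ∈ basicSet S a B, basicSet S a A ⊆ X ∨ basicSet S a A ∩ X = ∅

def IsRamseyNull (S : Set (Setoid ℕ)) (X : Set ↥S) : Prop :=
  ∀ (a : Set (ℕ × ℕ)) (B : ↥S), (basicSet S a B).Nonempty →
    ∃ A ∈ basicSet S a B, basicSet S a A ∩ X = ∅

/-- The property of Baire with respect to the Ellentuck topology. -/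
noncomputable def HasBP (S : Set (Setoid ℕ)) (X : Set ↥S) : Prop :=
  ∃ O M : Set ↥S, (ellentuckTop S).IsOpen O ∧ @IsMeagre _ (ellentuckTop S) M ∧
    X = (O \ M) ∪ (M \ O)

/-- The Souslin operation applied to a scheme indexed by finite sequences of naturals. -/
def souslinOp {X : Type*} (A : List ℕ → Set X) : Set X :=
  ⋃ x : ℕ → ℕ, ⋂ n : ℕ, A ((List.range n).map x)

/-- `Y` belongs to the smallest field of sets containing all `t`-open sets and
closed under the Souslin operation. -/
def SouslinMeasurable {X : Type*} (t : TopologicalSpace X) (Y : Set X) : Prop :=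
  ∀ 𝒜 : Set (Set X),
    (∀ U, t.IsOpen U → U ∈ 𝒜) →
    (∀ A ∈ 𝒜, Aᶜ ∈ 𝒜) →
    (∀ A ∈ 𝒜, ∀ B ∈ 𝒜, A ∪ B ∈ 𝒜) →
    (∀ f : List ℕ → Set X, (∀ s, f s ∈ 𝒜) → souslinOp f ∈ 𝒜) →
    Y ∈ 𝒜

/-- The graph of an equivalence relation as a boolean-valued function. -/
noncomputable def graphMap {X : Type*} (E : Setoid X) : X × X → Bool :=
  fun q => @decide (E.r q.1 q.2) (Classical.dec _)

/-- The metrizable topology on a space of equivalence relations, as a subspace of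
`2^(X × X)` via graphs. -/
noncomputable def graphTop {X : Type*} (S : Set (Setoid X)) : TopologicalSpace ↥S :=
  TopologicalSpace.induced (fun E => graphMap E.1) inferInstance



/-- `σ(k)`: the largest `n` such that `2^n` divides `k+1`. -/
def sigmaSeq (k : ℕ) : ℕ := padicValNat 2 (k + 1)

/-- `𝓔^P_∞` for a partition `P` of ℕ into infinitely many infinite pieces: the
`P`-alternating equivalence relations, i.e. those with infinitely many classes whose
`k`-th minimal representative lies in `P (σ k)`. -/
noncomputable def EPaltInf (P : ℕ → Set ℕ) : Set (Setoid ℕ) :=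
  {E | (classes E).Infinite ∧ ∀ k : ℕ, pRep E k ∈ P (sigmaSeq k)}

section

/-! ### Part 1: minimal idempotents in compact right-topological semigroups -/

theorem exists_min_idem {S : Type*} [Semigroup S] [TopologicalSpace S] [CompactSpace S] [T2Space S]
    (hc : ∀ r : S, Continuous (· * r)) (I : Set S) (hI : IsClosed I) (hne : I.Nonempty)
    (hl : ∀ s : S, ∀ x ∈ I, s * x ∈ I) :
    ∃ v ∈ I, v * v = v ∧ ∀ x : S, ∃ q : S, q * (x * v) = v := by
  let Z : Set (Set S) := {N | IsClosed N ∧ N.Nonempty ∧ ∀ s : S, ∀ x ∈ N, s * x ∈ N}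
  have hIZ : I ∈ Z := ⟨hI, hne, hl⟩
  obtain ⟨M, hMI, hM⟩ := zorn_superset_nonempty Z (by
    intro c hcs hch hcne
    refine ⟨⋂₀ c, ⟨isClosed_sInter fun t ht => (hcs ht).1, ?_, ?_⟩, fun s hs =>
      Set.sInter_subset_of_mem hs⟩
    · rw [Set.sInter_eq_iInter]
      have := hcne.coe_sort
      apply IsCompact.nonempty_iInter_of_directed_nonempty_isCompact_isClosed
      · exact DirectedOn.directed_val (IsChain.directedOn hch.symm)
      · exact fun i => (hcs i.prop).2.1
      · exact fun i => (hcs i.prop).1.isCompact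
      · exact fun i => (hcs i.prop).1
    · intro s x hx t ht
      exact (hcs ht).2.2 s x (hx t ht)) I hIZ
  obtain ⟨hMc, hMne, hMl⟩ := hM.prop
  obtain ⟨v, hv, hvv⟩ := exists_idempotent_in_compact_subsemigroup hc M hMne hMc.isCompact
    (fun x _ y hy => hMl x y hy)
  refine ⟨v, hMI hv, hvv, fun x => ?_⟩
  have hx : x * v ∈ M := hMl x v hv
  have hN : (Set.range (fun q : S => q * (x * v))) ∈ Z := by
    refine ⟨(isCompact_range (hc _)).isClosed, ⟨_, ⟨v, rfl⟩⟩, ?_⟩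
    rintro s _ ⟨q, rfl⟩
    exact ⟨s * q, mul_assoc _ _ _⟩
  have hsub : M ⊆ Set.range (fun q : S => q * (x * v)) := by
    apply hM.le_of_le hN
    rintro _ ⟨q, rfl⟩
    exact hMl _ _ hx
  obtain ⟨q, hq⟩ := hsub hv
  exact ⟨q, hq⟩

theorem exists_left_var {S T A : Type*} [Semigroup S] [TopologicalSpace S] [CompactSpace S]
    [T2Space S] [Semigroup T] [TopologicalSpace T] [CompactSpace T] [T2Space T] [Nonempty T]
    (hS : ∀ r : S, Continuous (· * r)) (hT : ∀ r : T, Continuous (· * r))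
    (i : T → S) (hi : ∀ x y, i (x * y) = i x * i y)
    (f : A → S → T) (hf : ∀ a x y, f a (x * y) = f a x * f a y) (hfi : ∀ a x, f a (i x) = x) :
    ∃ w : T, w * w = w ∧ ∀ r : S, ∃ q : S, ∀ a, w * f a (r * q) = w := by
  obtain ⟨w, -, hww, hwm⟩ := exists_min_idem hT Set.univ isClosed_univ Set.univ_nonempty
    (fun _ _ _ => trivial)
  have hwi : i w * i w = i w := by rw [← hi, hww]
  obtain ⟨u, ⟨y, hy⟩, huu, hum⟩ := exists_min_idem hS (Set.range (fun x : S => x * i w))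
    (isCompact_range (hS _)).isClosed ⟨_, ⟨i w, rfl⟩⟩ (by
      rintro s _ ⟨q, rfl⟩
      exact ⟨s * q, mul_assoc _ _ _⟩)
  have huw : u * i w = u := by rw [← hy]; simp only [mul_assoc, hwi]
  obtain ⟨v, hv⟩ : ∃ v, v = i w * u := ⟨_, rfl⟩
  have hwv : i w * v = v := by rw [hv, ← mul_assoc, hwi]
  have hvw : v * i w = v := by rw [hv, mul_assoc, huw]
  have hvv : v * v = v := by
    calc v * v = i w * (u * i w) * u := by rw [hv]; simp only [mul_assoc]
      _ = v := by rw [huw, mul_assoc, huu, hv]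
  have hvm : ∀ x : S, ∃ q : S, q * (x * v) = v := by
    intro x
    obtain ⟨q, hq⟩ := hum (x * i w)
    refine ⟨i w * q, ?_⟩
    calc i w * q * (x * v) = i w * (q * (x * i w * u)) := by rw [hv]; simp only [mul_assoc]
      _ = v := by rw [hq, hv]
  have hfv : ∀ a, f a v = w := by
    intro a
    have h1 : f a v * f a v = f a v := by rw [← hf, hvv]
    have h2 : w * f a v = f a v := by
      conv_rhs => rw [← hwv, hf, hfi]
    have h3 : f a v * w = f a v := by
      conv_rhs => rw [← hvw, hf, hfi]
    obtain ⟨q, hq⟩ := hwm (f a v)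
    rw [h3] at hq
    rw [← h2, ← hq, mul_assoc, h1]
  refine ⟨w, hww, fun r => ?_⟩
  obtain ⟨p, hp⟩ := hvm (v * r)
  obtain ⟨p2, hp2⟩ := hvm (v * p)
  have hinv : v * (r * (v * p * v)) = v := by
    have e1 : (v * p * v) * (v * r * v) = v := by
      calc (v * p * v) * (v * r * v) = v * (p * ((v * v) * r * v)) := by simp only [mul_assoc]
        _ = v := by rw [hvv, hp, hvv]
    have e2 : (v * p2 * v) * (v * p * v) = v := by
      calc (v * p2 * v) * (v * p * v) = v * (p2 * ((v * v) * p * v)) := by simp only [mul_assoc]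
        _ = v := by rw [hvv, hp2, hvv]
    calc v * (r * (v * p * v)) = (v * r * v) * (p * v) := by simp only [mul_assoc]
      _ = v * (r * v * (p * v)) := by simp only [mul_assoc]
      _ = ((v * p2 * v) * (v * p * v)) * (r * v * (p * v)) := by rw [e2]
      _ = (v * p2 * v) * ((v * p * (v * r * v)) * (p * v)) := by simp only [mul_assoc]
      _ = (v * p2 * v) * ((v * p * ((v * v) * r * v)) * (p * v)) := by rw [hvv]
      _ = (v * p2 * v) * (((v * p * v) * (v * r * v)) * (p * v)) := by simp only [mul_assoc]
      _ = (v * p2 * v) * (v * (p * v)) := by rw [e1]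
      _ = (v * p2 * v) * (v * p * v) := by simp only [mul_assoc]
      _ = v := e2
  refine ⟨v * p * v, fun a => ?_⟩
  conv_lhs => rw [← hfv a, ← hf, hinv]
  exact hfv a

/-! ### Part 2: ultrafilters on words -/

/-- Words over `L` of length divisible by `D`. -/
def Wd (L : Type*) (D : ℕ) : Type _ := {l : List L // D ∣ l.length}

instance {L : Type*} {D : ℕ} : Semigroup (Wd L D) where
  mul x y := ⟨x.1 ++ y.1, by rw [List.length_append]; exact dvd_add x.2 y.2⟩
  mul_assoc x y z := Subtype.ext (List.append_assoc _ _ _)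

theorem Wd.mul_val {L : Type*} {D : ℕ} (x y : Wd L D) : (x * y).1 = x.1 ++ y.1 := rfl

/-- letterwise map -/
def Wd.map {L M : Type*} {D : ℕ} (g : L → M) (x : Wd L D) : Wd M D :=
  ⟨x.1.map g, by rw [List.length_map]; exact x.2⟩

theorem Wd.map_mul {L M : Type*} {D : ℕ} (g : L → M) (x y : Wd L D) :
    Wd.map g (x * y) = Wd.map g x * Wd.map g y := Subtype.ext List.map_append

attribute [local instance] Ultrafilter.mul Ultrafilter.semigroup

theorem ultrafilter_map_mul {M N : Type*} [Semigroup M] [Semigroup N] (g : M → N)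
    (hg : ∀ x y, g (x * y) = g x * g y) (U V : Ultrafilter M) :
    (U * V).map g = U.map g * V.map g := by
  apply Ultrafilter.coe_inj.mp
  apply Filter.ext'
  intro p
  rw [Ultrafilter.eventually_mul, Ultrafilter.coe_map, Filter.eventually_map,
    Ultrafilter.eventually_mul]
  simp only [Ultrafilter.coe_map, Filter.eventually_map, hg]

theorem ultrafilter_left_var {M N A : Type*} [Semigroup M] [Semigroup N] [Nonempty N]
    (i : N → M) (hi : ∀ x y, i (x * y) = i x * i y)
    (f : A → M → N) (hf : ∀ a x y, f a (x * y) = f a x * f a y) (hfi : ∀ a x, f a (i x) = x) :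
    ∃ w : Ultrafilter N, w * w = w ∧ ∀ r : Ultrafilter M, ∃ q : Ultrafilter M,
      ∀ a, w * (r * q).map (f a) = w := by
  have h1 : ∀ r : Ultrafilter M, Continuous (fun x : Ultrafilter M => x * r) :=
    fun r => Ultrafilter.continuous_mul_left r
  have h2 : ∀ r : Ultrafilter N, Continuous (fun x : Ultrafilter N => x * r) :=
    fun r => Ultrafilter.continuous_mul_left r
  have h3 : ∀ a, ∀ x : Ultrafilter N, (x.map i).map (f a) = x := by
    intro a x
    rw [Ultrafilter.map_map]
    have : f a ∘ i = id := funext (hfi a)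
    rw [this, Ultrafilter.map_id]
  exact exists_left_var h1 h2 (fun U => U.map i) (ultrafilter_map_mul i hi)
    (fun a U => U.map (f a)) (fun a => ultrafilter_map_mul (f a) (hf a)) h3

theorem word_ultrafilter (L : Type*) (D : ℕ) :
    ∃ w : Ultrafilter (Wd L D),
      (∀ p : Wd L D → Prop, (∀ᶠ u in w, p u) → ∀ᶠ u in w, ∀ᶠ u' in w, p (u * u')) ∧
      ∀ r : Wd (Option L) D, ∃ q : Ultrafilter (Wd (Option L) D),
      ∀ a : L, ∀ p : Wd L D → Prop, (∀ᶠ u in w, p u) →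
        ∀ᶠ u in w, ∀ᶠ z in q, p (u * Wd.map (fun o => o.getD a) (r * z)) := by
  have : Nonempty (Wd L D) := ⟨⟨[], by simp⟩⟩
  obtain ⟨w, hww, hw⟩ := ultrafilter_left_var (M := Wd (Option L) D) (N := Wd L D) (A := L)
    (Wd.map some) (Wd.map_mul _) (fun a => Wd.map (fun o => o.getD a))
    (fun a => Wd.map_mul _) (by
      intro a x
      apply Subtype.ext
      simp [Wd.map, Function.comp_def])
  refine ⟨w, fun p hp => ?_, fun r => ?_⟩
  · rw [← hww, Ultrafilter.eventually_mul] at hp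
    exact hp
  obtain ⟨q, hq⟩ := hw (pure r)
  refine ⟨q, fun a p hp => ?_⟩
  rw [← hq a, Ultrafilter.eventually_mul] at hp
  refine hp.mono fun u hu => ?_
  rw [Ultrafilter.coe_map, Filter.eventually_map, Ultrafilter.eventually_mul] at hu
  simpa using hu

end

/-! ### Arithmetic of `sigmaSeq` and counting -/

theorem sig_iff (x s : ℕ) : sigmaSeq x = s ↔ (2 ^ s ∣ x + 1 ∧ ¬ 2 ^ (s + 1) ∣ x + 1) := by
  unfold sigmaSeq
  have h : ∀ n, 2 ^ n ∣ x + 1 ↔ n ≤ padicValNat 2 (x + 1) := fun n =>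
    padicValNat_dvd_iff_le (p := 2) (by omega)
  rw [h, h]; omega

theorem sig_add {x y t : ℕ} (h : sigmaSeq x = t) (hy : 2 ^ (t + 1) ∣ y) :
    sigmaSeq (x + y) = t := by
  rw [sig_iff] at h ⊢
  have e : x + y + 1 = x + 1 + y := by ring
  rw [e]
  refine ⟨dvd_add h.1 ((pow_dvd_pow 2 (Nat.le_succ t)).trans hy), fun h' => h.2 ?_⟩
  exact (Nat.dvd_add_iff_left hy).mpr h'

theorem sig_exists (x s : ℕ) :
    ∃ d < 2 ^ (s + 1), sigmaSeq (x + d) = s ∧ (sigmaSeq x = s → d = 0) := by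
  by_cases hx : sigmaSeq x = s
  · exact ⟨0, by positivity, by simpa using hx, fun _ => rfl⟩
  -- want `x + 1 + d ≡ 2 ^ s`
  have hpos : 0 < 2 ^ (s + 1) := by positivity
  have hlt : 2 ^ s < 2 ^ (s + 1) := Nat.pow_lt_pow_right (by norm_num) (Nat.lt_succ_self s)
  refine ⟨(2 ^ s + (2 ^ (s + 1) - (x + 1) % 2 ^ (s + 1))) % 2 ^ (s + 1), Nat.mod_lt _ hpos, ?_,
    fun h => absurd h hx⟩
  set M := 2 ^ (s + 1) with hM
  have hr : (x + 1) % M < M := Nat.mod_lt _ hpos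
  have hmod : (x + 1 + (2 ^ s + (M - (x + 1) % M)) % M) % M = 2 ^ s := by
    rw [Nat.add_mod_mod, Nat.add_mod, Nat.add_mod_mod]
    have : (x + 1) % M + (2 ^ s + (M - (x + 1) % M)) = 2 ^ s + M := by omega
    rw [this, Nat.add_mod_right, Nat.mod_eq_of_lt hlt]
  rw [sig_iff, ← hM]
  have e : x + (2 ^ s + (M - (x + 1) % M)) % M + 1 = x + 1 + (2 ^ s + (M - (x + 1) % M)) % M := by
    ring
  rw [e]
  generalize x + 1 + (2 ^ s + (M - (x + 1) % M)) % M = y at hmod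
  constructor
  · have h1 : 2 ^ s ∣ M := pow_dvd_pow 2 (Nat.le_succ s)
    rw [← Nat.mod_add_div y M, hmod]
    exact dvd_add (dvd_refl _) (h1.mul_right _)
  · intro h
    rw [Nat.mod_eq_zero_of_dvd h] at hmod
    have : 0 < 2 ^ s := by positivity
    omega

/-- Counting function of a predicate. -/
noncomputable def cnt (Q : ℕ → Prop) (n : ℕ) : ℕ := @Nat.count Q (Classical.decPred Q) n

theorem cnt_zero (Q : ℕ → Prop) : cnt Q 0 = 0 := by simp [cnt]

theorem cnt_succ_pos {Q : ℕ → Prop} {n : ℕ} (h : Q n) : cnt Q (n + 1) = cnt Q n + 1 := by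
  simp [cnt, Nat.count_succ, h]

theorem cnt_succ_neg {Q : ℕ → Prop} {n : ℕ} (h : ¬ Q n) : cnt Q (n + 1) = cnt Q n := by
  simp [cnt, Nat.count_succ, h]

theorem cnt_congr {Q R : ℕ → Prop} {n : ℕ} (h : ∀ i < n, (Q i ↔ R i)) : cnt Q n = cnt R n := by
  induction n with
  | zero => simp [cnt_zero]
  | succ n ih =>
    have ih' := ih (fun i hi => h i (by omega))
    by_cases hq : Q n
    · rw [cnt_succ_pos hq, cnt_succ_pos ((h n (by omega)).1 hq), ih']
    · rw [cnt_succ_neg hq, cnt_succ_neg (fun hr => hq ((h n (by omega)).2 hr)), ih']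

theorem cnt_gap {Q : ℕ → Prop} {m n : ℕ} (hmn : m ≤ n) (h : ∀ i, m ≤ i → i < n → ¬ Q i) :
    cnt Q n = cnt Q m := by
  induction n, hmn using Nat.le_induction with
  | base => rfl
  | succ n hmn ih =>
    rw [cnt_succ_neg (h n hmn (by omega)), ih (fun i h1 h2 => h i h1 (by omega))]

theorem cnt_mono {Q : ℕ → Prop} {m n : ℕ} (hmn : m ≤ n) : cnt Q m ≤ cnt Q n := by
  unfold cnt
  exact @Nat.count_monotone Q (Classical.decPred Q) _ _ hmn

/-! ### The pigeonhole principle for words -/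

/-- Substitution of values for the variables of a word. -/
def sbst {L : Type*} (α : ℕ → L) (l : List (L ⊕ ℕ)) : List L := l.map (Sum.elim id α)

theorem sbst_append {L : Type*} (α : ℕ → L) (l m : List (L ⊕ ℕ)) :
    sbst α (l ++ m) = sbst α l ++ sbst α m := List.map_append

theorem sbst_inl {L : Type*} (α : ℕ → L) (l : List L) :
    sbst α (l.map Sum.inl) = l := by simp [sbst, Function.comp_def]

structure GoodW {L : Type*} (C : List L → Prop) (q0 t : ℕ) (I : List L → Prop)
    (l : List (L ⊕ ℕ)) : Prop where
  g1 : ∀ i j : ℕ, l[i]? = some (Sum.inr j) → j ≤ i ∧ l[j]? = some (Sum.inr j)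
  g2 : ∀ j : ℕ, l[j]? = some (Sum.inr j) →
    sigmaSeq (q0 + j) = sigmaSeq (q0 + cnt (fun i => l[i]? = some (Sum.inr i)) j)
  g3 : ∀ j : ℕ, l[j]? = some (Sum.inr j) → sigmaSeq (q0 + j) = t → ∀ α : ℕ → L, C (sbst α (l.take j))
  g4 : sigmaSeq (q0 + l.length) = t
  g5 : ∀ α : ℕ → L, I (sbst α l)

theorem goodW_extend {L : Type*} {C : List L → Prop} {q0 t : ℕ} {I : List L → Prop}
    {l : List (L ⊕ ℕ)} (hl : GoodW C q0 t I l) (m : List L) (rest : List (L ⊕ ℕ))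
    (hrest : ∀ x ∈ rest, ∀ j, x = Sum.inr j → j = l.length + m.length)
    (hty : sigmaSeq (q0 + (l.length + m.length)) =
      sigmaSeq (q0 + cnt (fun i => l[i]? = some (Sum.inr i)) l.length))
    (hC : sigmaSeq (q0 + (l.length + m.length)) = t → ∀ α : ℕ → L, C (sbst α l ++ m))
    (h4 : sigmaSeq (q0 + (l.length + m.length + 1 + rest.length)) = t)
    (h5 : ∀ α : ℕ → L, I (sbst α l ++ (m ++ sbst α (Sum.inr (l.length + m.length) :: rest)))) :
    GoodW C q0 t I (l ++ (m.map Sum.inl ++ Sum.inr (l.length + m.length) :: rest)) := by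
  obtain ⟨l', hl'⟩ : ∃ l', l' = l ++ (m.map Sum.inl ++ Sum.inr (l.length + m.length) :: rest) :=
    ⟨_, rfl⟩
  rw [← hl']
  have e1 : ∀ i < l.length, l'[i]? = l[i]? := by
    intro i hi; rw [hl', List.getElem?_append_left hi]
  have e2 : ∀ i, l.length ≤ i → i < l.length + m.length → ∀ j, l'[i]? ≠ some (Sum.inr j) := by
    intro i h1 h2 j
    rw [hl', List.getElem?_append_right h1, List.getElem?_append_left (by simp; omega)]
    simp
  have e3 : l'[l.length + m.length]? = some (Sum.inr (l.length + m.length)) := by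
    rw [hl', List.getElem?_append_right (by omega), List.getElem?_append_right (by simp)]
    simp
  have e4 : ∀ i, l.length + m.length < i → ∀ j, l'[i]? = some (Sum.inr j) →
      j = l.length + m.length := by
    intro i hi j h
    rw [hl', List.getElem?_append_right (by omega), List.getElem?_append_right (by simp; omega),
      List.getElem?_cons] at h
    split_ifs at h with h0
    · simp at h0; omega
    · exact hrest _ (List.mem_of_getElem? h) j rfl
  have hfix : ∀ j, l'[j]? = some (Sum.inr j) →
      (j < l.length ∧ l[j]? = some (Sum.inr j)) ∨ j = l.length + m.length := by
    intro j hj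
    rcases lt_or_ge j l.length with h | h
    · left; exact ⟨h, by rw [← e1 j h, hj]⟩
    rcases lt_or_ge j (l.length + m.length) with h' | h'
    · exact absurd hj (e2 j h h' j)
    · rcases h'.eq_or_lt with h'' | h''
      · right; exact h''.symm
      · right; exact e4 j h'' j hj
  have hcnt : ∀ j ≤ l.length, cnt (fun i => l'[i]? = some (Sum.inr i)) j =
      cnt (fun i => l[i]? = some (Sum.inr i)) j := by
    intro j hj
    apply cnt_congr
    intro i hi
    rw [e1 i (by omega)]
  refine ⟨?_, ?_, ?_, ?_, ?_⟩
  · intro i j h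
    rcases lt_or_ge i l.length with hi | hi
    · rw [e1 i hi] at h
      have := hl.g1 i j h
      exact ⟨this.1, by rw [e1 j (by omega)]; exact this.2⟩
    rcases lt_or_ge i (l.length + m.length) with hi' | hi'
    · exact absurd h (e2 i hi hi' j)
    · rcases hi'.eq_or_lt with h' | h'
      · rw [← h', e3] at h
        simp at h
        subst h
        exact ⟨hi', e3⟩
      · have := e4 i h' j h
        subst this
        exact ⟨hi', e3⟩
  · intro j hj
    rcases hfix j hj with ⟨h1, h2⟩ | h
    · rw [hcnt j h1.le]; exact hl.g2 j h2
    · subst h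
      rw [hty, cnt_gap (Q := fun i => l'[i]? = some (Sum.inr i)) (m := l.length) (by omega)
        (fun i h1 h2 => e2 i h1 h2 i), hcnt _ le_rfl]
  · intro j hj hs α
    rcases hfix j hj with ⟨h1, h2⟩ | h
    · have : l'.take j = l.take j := by
        rw [hl', List.take_append_of_le_length h1.le]
      rw [this]; exact hl.g3 j h2 hs α
    · subst h
      have : l'.take (l.length + m.length) = l ++ m.map Sum.inl := by
        rw [hl', ← List.append_assoc]
        exact List.take_left' (by simp)
      rw [this, sbst_append, sbst_inl]
      exact hC hs α
  · rw [hl']; simp only [List.length_append, List.length_map, List.length_cons]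
    rw [← h4]; congr 1; ring
  · intro α
    rw [hl', sbst_append, sbst_append, sbst_inl]
    exact h5 α

theorem finite_sbst {L : Type*} [Finite L] (l : List (L ⊕ ℕ)) :
    (Set.range (fun α : ℕ → L => sbst α l)).Finite := by
  refine (List.finite_length_eq L l.length).subset ?_
  rintro _ ⟨α, rfl⟩
  simp [sbst]

/-- `w`-almost every continuation of `u` lies in `C`. -/
def IW {L : Type*} {D : ℕ} (C : List L → Prop) (w : Ultrafilter (Wd L D)) (u : List L) : Prop :=
  Filter.Eventually (fun u' : Wd L D => C (u ++ u'.1)) (w : Filter (Wd L D))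

theorem goodW_step {L : Type*} [Finite L] [Nonempty L] (C : List L → Prop) (q0 t D : ℕ) (hD : D = 2 ^ (t + 1))
    (w : Ultrafilter (Wd L D))
    (hww : ∀ p : Wd L D → Prop,
      (∀ᶠ u in w, p u) → ∀ᶠ u in w, ∀ᶠ u' in w, p (u * u'))
    (hw : ∀ r : Wd (Option L) D, ∃ q : Ultrafilter (Wd (Option L) D),
      ∀ a : L, ∀ p : Wd L D → Prop, (∀ᶠ u in w, p u) →
        ∀ᶠ u in w, ∀ᶠ z in q, p (u * Wd.map (fun o => o.getD a) (r * z)))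
    (l : List (L ⊕ ℕ)) (hl : GoodW C q0 t (IW C w) l) :
    ∃ e : List (L ⊕ ℕ), GoodW C q0 t (IW C w) (l ++ e) ∧
      ∃ j, l.length ≤ j ∧ (l ++ e)[j]? = some (Sum.inr j) := by
  obtain ⟨a0⟩ := ‹Nonempty L›
  have hDpos : 0 < D := by rw [hD]; positivity
  obtain ⟨s, hs⟩ : ∃ s, s = sigmaSeq (q0 + cnt (fun i => l[i]? = some (Sum.inr i)) l.length) :=
    ⟨_, rfl⟩
  let r : ℕ → Wd (Option L) D := fun d =>
    ⟨List.replicate d (some a0) ++ none :: List.replicate ((d + 1) * (D - 1)) (some a0), by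
      refine ⟨d + 1, ?_⟩
      simp only [List.length_append, List.length_replicate, List.length_cons]
      obtain ⟨D', hD'⟩ : ∃ D', D = D' + 1 := ⟨D - 1, by omega⟩
      rw [hD', Nat.add_sub_cancel]; ring⟩
  choose q hq using fun d => hw (r d)
  have hU := finite_sbst l
  -- choose the next word
  have hev : ∀ᶠ (u' : Wd L D) in w, ∀ u ∈ Set.range (fun α : ℕ → L => sbst α l),
      C (u ++ u'.1) ∧ ∀ d ∈ Set.Iio (2 ^ (s + 1)), ∀ a : L, ∀ᶠ z in q d,
        ∀ᶠ (u'' : Wd L D) in w, C (u ++ (u' * Wd.map (fun o : Option L => o.getD a) (r d * z) * u'').1) := by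
    rw [Filter.eventually_all_finite hU]
    rintro _ ⟨α, rfl⟩
    refine (hl.g5 α).and ?_
    rw [Filter.eventually_all_finite (Set.finite_Iio _)]
    intro d _
    rw [Filter.eventually_all]
    intro a
    exact hq d a (fun x => ∀ᶠ u'' in w, C (sbst α l ++ (x * u'').1)) (hww _ (hl.g5 α))
  obtain ⟨u', hu'⟩ := hev.exists
  obtain ⟨d, hd, hds, hd0⟩ := sig_exists (q0 + l.length + u'.1.length) s
  have hev2 : ∀ᶠ z in q d, ∀ u ∈ Set.range (fun α : ℕ → L => sbst α l), ∀ a : L,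
      ∀ᶠ (u'' : Wd L D) in w, C (u ++ (u' * Wd.map (fun o : Option L => o.getD a) (r d * z) * u'').1) := by
    rw [Filter.eventually_all_finite hU]
    intro u hu
    rw [Filter.eventually_all]
    intro a
    exact (hu' u hu).2 d hd a
  obtain ⟨z, hz⟩ := hev2.exists
  have hlt : sigmaSeq (q0 + l.length + u'.1.length) = t := sig_add hl.g4 (hD ▸ u'.2)
  obtain ⟨m, hm⟩ : ∃ m, m = u'.1 ++ List.replicate d a0 := ⟨_, rfl⟩
  have hml : m.length = u'.1.length + d := by simp [hm]
  obtain ⟨v, hv⟩ : ∃ v : L ⊕ ℕ, v = Sum.inr (l.length + m.length) := ⟨_, rfl⟩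
  obtain ⟨rest, hrest⟩ : ∃ rest : List (L ⊕ ℕ), rest =
    (List.replicate ((d + 1) * (D - 1)) (some a0) ++ z.1).map
      (fun o => o.elim (Sum.inr (l.length + m.length)) Sum.inl) := ⟨_, rfl⟩
  refine ⟨m.map Sum.inl ++ Sum.inr (l.length + m.length) :: rest,
    goodW_extend hl m rest ?_ ?_ ?_ ?_ ?_, l.length + m.length, by omega, ?_⟩
  · intro x hx j hj
    rw [hrest, List.mem_map] at hx
    obtain ⟨o, -, ho⟩ := hx
    cases o with
    | none => simp at ho; rw [← ho] at hj; simpa using hj.symm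
    | some b => simp at ho; rw [← ho] at hj; simp at hj
  · rw [← hs, ← hds, hml]; congr 1; ring
  · intro h α
    have : d = 0 := by
      apply hd0
      rw [hlt, ← h, ← hds, hml]; congr 1; ring
    rw [hm, this]
    simpa using (hu' _ ⟨α, rfl⟩).1
  · have : q0 + (l.length + m.length + 1 + rest.length) =
        q0 + l.length + u'.1.length + (r d * z).1.length := by
      rw [Wd.mul_val, hrest, hml]
      simp only [r, List.length_append, List.length_map, List.length_replicate, List.length_cons]
      ring
    rw [this]
    exact sig_add hlt (hD ▸ (r d * z).2)
  · intro α
    have := hz _ ⟨α, rfl⟩ (α (l.length + m.length))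
    refine this.mono fun u'' h => ?_
    have key : (Wd.map (fun o : Option L => o.getD (α (l.length + m.length))) (r d * z)).1 =
        List.replicate d a0 ++ sbst α (Sum.inr (l.length + m.length) :: rest) := by
      change List.map _ ((List.replicate d (some a0) ++
        none :: List.replicate ((d + 1) * (D - 1)) (some a0)) ++ z.1) = _
      rw [hrest]
      simp only [sbst, List.map_append, List.map_cons, List.map_replicate,
        List.append_assoc, List.map_map, List.cons_append, Option.getD_some, Option.getD_none,
        Sum.elim_inr, Option.elim_some, Sum.elim_inl, id]
      congr 3
      apply List.map_congr_left
      intro o _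
      cases o <;> simp
    rw [Wd.mul_val, Wd.mul_val, key] at h
    convert h using 1
    rw [hm]
    simp only [List.append_assoc]
  · rw [List.getElem?_append_right (by omega), List.getElem?_append_right (by simp)]
    simp

theorem word_ph {L : Type*} [Finite L] [Nonempty L] (C : List L → Prop) (q0 t : ℕ) :
    ∃ W : ℕ → L ⊕ ℕ, (∀ i j, W i = Sum.inr j → j ≤ i ∧ W j = Sum.inr j) ∧
      {j | W j = Sum.inr j}.Infinite ∧
      (∀ j, W j = Sum.inr j →
        sigmaSeq (q0 + j) = sigmaSeq (q0 + cnt (fun i => W i = Sum.inr i) j)) ∧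
      ((∀ j, W j = Sum.inr j → sigmaSeq (q0 + j) = t → ∀ α : ℕ → L,
        C (sbst α ((List.range j).map W))) ∨
       (∀ j, W j = Sum.inr j → sigmaSeq (q0 + j) = t → ∀ α : ℕ → L,
        ¬ C (sbst α ((List.range j).map W)))) := by
  obtain ⟨w, hww, hw⟩ := word_ultrafilter L (2 ^ (t + 1))
  obtain ⟨a0⟩ := ‹Nonempty L›
  obtain ⟨d, -, hd, -⟩ := sig_exists q0 t
  -- reduce to one colour
  suffices key : ∀ C : List L → Prop, IW C w (List.replicate d a0) →
      ∃ W : ℕ → L ⊕ ℕ, (∀ i j, W i = Sum.inr j → j ≤ i ∧ W j = Sum.inr j) ∧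
      {j | W j = Sum.inr j}.Infinite ∧
      (∀ j, W j = Sum.inr j →
        sigmaSeq (q0 + j) = sigmaSeq (q0 + cnt (fun i => W i = Sum.inr i) j)) ∧
      (∀ j, W j = Sum.inr j → sigmaSeq (q0 + j) = t → ∀ α : ℕ → L,
        C (sbst α ((List.range j).map W))) by
    rcases w.em (fun u' => C (List.replicate d a0 ++ u'.1)) with h | h
    · obtain ⟨W, h1, h2, h3, h4⟩ := key C h
      exact ⟨W, h1, h2, h3, Or.inl h4⟩
    · obtain ⟨W, h1, h2, h3, h4⟩ := key (fun u => ¬ C u) h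
      exact ⟨W, h1, h2, h3, Or.inr h4⟩
  intro C hC
  have hinit : GoodW C q0 t (IW C w)
      ((List.replicate d a0).map Sum.inl) := by
    have hno : ∀ i j : ℕ, ((List.replicate d a0).map (Sum.inl : L → L ⊕ ℕ))[i]? ≠ some (Sum.inr j) := by
      intro i j h
      have := List.mem_of_getElem? h
      simp at this
    refine ⟨fun i j h => absurd h (hno i j), fun j h => absurd h (hno j j),
      fun j h => absurd h (hno j j), by simpa using hd, fun α => ?_⟩
    rw [sbst_inl]; exact hC
  have : Nonempty L := ⟨a0⟩
  choose! E hE1 hE2 using goodW_step C q0 t _ rfl w hww hw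
  let s : ℕ → List (L ⊕ ℕ) := fun k =>
    Nat.rec ((List.replicate d a0).map Sum.inl) (fun _ l => l ++ E l) k
  have hs1 : ∀ k, s (k + 1) = s k ++ E (s k) := fun k => rfl
  have hg : ∀ k, GoodW C q0 t (IW C w) (s k) := by
    intro k
    induction k with
    | zero => exact hinit
    | succ k ih => rw [hs1]; exact hE1 _ ih
  have hlen1 : ∀ k, (s k).length < (s (k + 1)).length := by
    intro k
    obtain ⟨j, h1, h2⟩ := hE2 _ (hg k)
    rw [← hs1] at h2
    have := (List.getElem?_eq_some_iff.1 h2).1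
    omega
  have hlen : ∀ k, k ≤ (s k).length := by
    intro k
    induction k with
    | zero => omega
    | succ k ih => have := hlen1 k; omega
  have hpre : ∀ k k', k ≤ k' → s k <+: s k' := by
    intro k k' h
    induction k', h using Nat.le_induction with
    | base => exact List.prefix_refl _
    | succ k' _ ih => exact ih.trans (by rw [hs1]; exact List.prefix_append _ _)
  have hget : ∀ k k' i, i < (s k).length → i < (s k').length → (s k)[i]? = (s k')[i]? := by
    have aux : ∀ k k' i, k ≤ k' → i < (s k).length → (s k)[i]? = (s k')[i]? := by
      intro k k' i h hi
      obtain ⟨e, he⟩ := hpre k k' h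
      rw [← he, List.getElem?_append_left hi]
    intro k k' i h1 h2
    rcases le_total k k' with h | h
    · exact aux k k' i h h1
    · exact (aux k' k i h h2).symm
  let W : ℕ → L ⊕ ℕ := fun i => (s (i + 1))[i]'(hlen (i + 1))
  have hW : ∀ k i, i < (s k).length → (s k)[i]? = some (W i) := by
    intro k i hi
    rw [hget k (i + 1) i hi (hlen (i + 1))]
    exact List.getElem?_eq_getElem _
  have hWfix : ∀ k i j, i < (s k).length → ((s k)[i]? = some (Sum.inr j) ↔ W i = Sum.inr j) := by
    intro k i j hi
    rw [hW k i hi]; simp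
  refine ⟨W, ?_, ?_, ?_, ?_⟩
  · intro i j h
    have := (hg (i + 1)).g1 i j ((hWfix (i + 1) i j (hlen (i + 1))).2 h)
    refine ⟨this.1, (hWfix (i + 1) j j ?_).1 this.2⟩
    exact (List.getElem?_eq_some_iff.1 this.2).1
  · refine Set.infinite_of_forall_exists_gt ?_
    intro k
    obtain ⟨j, h1, h2⟩ := hE2 _ (hg (k + 1))
    have h2 : (s (k + 1 + 1))[j]? = some (Sum.inr j) := h2
    refine ⟨j, (hWfix (k + 1 + 1) j j (List.getElem?_eq_some_iff.1 h2).1).1 h2, ?_⟩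
    have := hlen (k + 1)
    omega
  · intro j h
    rw [(hg (j + 1)).g2 j ((hWfix (j + 1) j j (hlen (j + 1))).2 h)]
    congr 2
    apply cnt_congr
    intro i hi
    exact hWfix (j + 1) i i (by have := hlen (j + 1); omega)
  · intro j h hs α
    have := (hg (j + 1)).g3 j ((hWfix (j + 1) j j (hlen (j + 1))).2 h) hs α
    convert this using 2
    apply List.ext_getElem?
    intro i
    rw [List.getElem?_take]
    split_ifs with hi
    · rw [hW (j + 1) i (by have := hlen (j + 1); omega)]
      simp [hi]
    · simp; omega

/-! ### Part 4: representative functions -/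

/-- `f` is the minimal-representative function of an alternating equivalence relation. -/
structure IsR (τ f : ℕ → ℕ) : Prop where
  le : ∀ x, f x ≤ x
  idem : ∀ x, f (f x) = f x
  inf : {x | f x = x}.Infinite
  alt : ∀ x, f x = x → τ x = sigmaSeq (cnt (fun y => f y = y) x)

def Le (f g : ℕ → ℕ) : Prop := ∀ x, f (g x) = f x

def EqN (N : ℕ) (f g : ℕ → ℕ) : Prop := ∀ x ≤ N, f x = g x

theorem EqN.symm {N : ℕ} {f g : ℕ → ℕ} (h : EqN N f g) : EqN N g f := fun x hx => (h x hx).symm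

theorem EqN.trans {N : ℕ} {f g h : ℕ → ℕ} (h1 : EqN N f g) (h2 : EqN N g h) : EqN N f h :=
  fun x hx => (h1 x hx).trans (h2 x hx)

theorem EqN.rfl {N : ℕ} {f : ℕ → ℕ} : EqN N f f := fun _ _ => Eq.refl _

theorem EqN.mono {N M : ℕ} {f g : ℕ → ℕ} (h : EqN M f g) (hN : N ≤ M) : EqN N f g :=
  fun x hx => h x (hx.trans hN)

theorem Le.trans {f g h : ℕ → ℕ} (h1 : Le f g) (h2 : Le g h) : Le f h := by
  intro x
  rw [← h1, h2, h1]

theorem IsR.le_self {τ f : ℕ → ℕ} (h : IsR τ f) : Le f f := h.idem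

theorem Le.fix {τ f g : ℕ → ℕ} (hf : IsR τ f) (hg : IsR τ g) (h : Le f g) {x : ℕ} (hx : f x = x) :
    g x = x := by
  have h1 := h x
  have h2 := hf.le (g x)
  have h3 := hg.le x
  omega

theorem IsR.zero {τ f : ℕ → ℕ} (h : IsR τ f) : f 0 = 0 := Nat.le_zero.1 (h.le 0)

theorem cnt_unbdd {Q : ℕ → Prop} (hQ : {x | Q x}.Infinite) (k : ℕ) :
    ∃ x, Q x ∧ cnt Q x = k := by
  classical
  refine ⟨Nat.nth Q k, Nat.nth_mem_of_infinite hQ k, ?_⟩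
  unfold cnt
  convert Nat.count_nth_of_infinite hQ k

theorem cnt_le_self (Q : ℕ → Prop) (x : ℕ) : cnt Q x ≤ x := by
  unfold cnt
  exact @Nat.count_le Q (Classical.decPred Q) x

theorem IsR.types {τ f : ℕ → ℕ} (h : IsR τ f) (s K : ℕ) : ∃ x ≥ K, f x = x ∧ τ x = s := by
  obtain ⟨d, -, hd, -⟩ := sig_exists K s
  obtain ⟨x, hx, hc⟩ := cnt_unbdd h.inf (K + d)
  refine ⟨x, ?_, hx, ?_⟩
  · have := cnt_le_self (fun x => f x = x) x
    omega
  · rw [h.alt x hx, hc, hd]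

theorem greedy (τ : ℕ → ℕ) (p init : ℕ → Prop) (N : ℕ)
    (hp : ∀ s K, ∃ x ≥ K, p x ∧ τ x = s)
    (hi : ∀ x ≤ N, init x → τ x = sigmaSeq (cnt init x)) :
    ∃ Q : ℕ → Prop, (∀ x ≤ N, Q x ↔ init x) ∧ (∀ x, N < x → Q x → p x) ∧ {x | Q x}.Infinite ∧
      ∀ x, Q x → τ x = sigmaSeq (cnt Q x) := by
  classical
  let keep : ℕ → ℕ → Prop := fun x k => (x ≤ N ∧ init x) ∨ (N < x ∧ p x ∧ τ x = sigmaSeq k)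
  let c : ℕ → ℕ := fun n => Nat.rec 0 (fun x k => if keep x k then k + 1 else k) n
  let Q : ℕ → Prop := fun x => keep x (c x)
  have hc1 : ∀ x, c (x + 1) = if keep x (c x) then c x + 1 else c x := fun x => rfl
  have hc : ∀ x, cnt Q x = c x := by
    intro x
    induction x with
    | zero => exact cnt_zero Q
    | succ x ih =>
      rw [hc1]
      split_ifs with h
      · rw [cnt_succ_pos (Q := Q) h, ih]
      · rw [cnt_succ_neg (Q := Q) h, ih]
  have hQi : ∀ x ≤ N, Q x ↔ init x := by
    intro x hx
    constructor
    · rintro (h | h)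
      · exact h.2
      · omega
    · exact fun h => Or.inl ⟨hx, h⟩
  refine ⟨Q, hQi, ?_, ?_, ?_⟩
  · rintro x hx (h | h)
    · omega
    · exact h.2.1
  · refine Set.infinite_of_forall_exists_gt fun K => ?_
    by_contra hcon
    push Not at hcon
    have hst : ∀ d, c (max K N + 1 + d) = c (max K N + 1) := by
      intro d
      induction d with
      | zero => rfl
      | succ d ih =>
        rw [← add_assoc, hc1, if_neg, ih]
        intro h
        have := hcon (max K N + 1 + d) h
        omega
    obtain ⟨x, hx, hpx, ht⟩ := hp (sigmaSeq (c (max K N + 1))) (max K N + 1)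
    obtain ⟨d, rfl⟩ := Nat.exists_eq_add_of_le hx
    have : Q (max K N + 1 + d) := Or.inr ⟨by omega, hpx, by rw [hst]; exact ht⟩
    have := hcon _ this
    omega
  · intro x hx
    by_cases hxN : x ≤ N
    · rw [hi x hxN ((hQi x hxN).1 hx)]
      congr 1
      apply cnt_congr
      intro y hy
      exact (hQi y (by omega)).symm
    · rcases hx with h | h
      · omega
      · rw [hc]; exact h.2.2

theorem mk_coarse {τ e φ : ℕ → ℕ} (he : IsR τ e)
    (h1 : ∀ y, e y = y → φ y ≤ y ∧ e (φ y) = φ y ∧ φ (φ y) = φ y) (Q : ℕ → Prop)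
    (hQ : ∀ x, Q x ↔ (e x = x ∧ φ x = x)) (hinf : {x | Q x}.Infinite)
    (halt : ∀ x, Q x → τ x = sigmaSeq (cnt Q x)) :
    IsR τ (fun x => φ (e x)) ∧ Le (fun x => φ (e x)) e := by
  have hfix : ∀ x, φ (e x) = x ↔ Q x := by
    intro x
    rw [hQ]
    constructor
    · intro h
      have a := (h1 (e x) (he.idem x)).1
      have b := he.le x
      have c : e x = x := by omega
      exact ⟨c, by rw [c] at h; exact h⟩
    · rintro ⟨a, b⟩
      rw [a, b]
  refine ⟨⟨fun x => ?_, fun x => ?_, ?_, ?_⟩, fun x => ?_⟩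
  · exact ((h1 (e x) (he.idem x)).1).trans (he.le x)
  · have := h1 (e x) (he.idem x)
    simp only [this.2.1, this.2.2]
  · simpa only [hfix] using hinf
  · intro x hx
    simp only [hfix] at hx ⊢
    exact halt x hx
  · simp only [he.idem]

theorem L1 {τ F E A : ℕ → ℕ} {N : ℕ} (hF : IsR τ F) (hE : IsR τ E) (hA : IsR τ A) (hFE : Le F E)
    (hN : F N = N) (hAE : EqN N A E) :
    ∃ F', IsR τ F' ∧ Le F' A ∧ EqN N F' F := by
  classical
  obtain ⟨Q, hQ1, hQ2, hQ3, hQ4⟩ := greedy τ (fun x => A x = x) (fun x => F x = x) N hA.types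
    (fun x _ h => hF.alt x h)
  let φ : ℕ → ℕ := fun y => if y ≤ N then F y else if Q y then y else 0
  have h0 : φ 0 = 0 := by simp [φ, hF.zero]
  have hfixA : ∀ y ≤ N, F y = y → A y = y := fun y hy h => by
    rw [hAE y hy]; exact hFE.fix hF hE h
  obtain ⟨r1, r2⟩ := mk_coarse (φ := φ) hA (by
    intro y hy
    by_cases h : y ≤ N
    · have e : φ y = F y := if_pos h
      have l := hF.le y
      have e2 : φ (F y) = F y := by
        rw [show φ (F y) = F (F y) from if_pos (by omega), hF.idem]
      rw [e]
      exact ⟨l, hfixA _ (by omega) (hF.idem y), e2⟩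
    · by_cases hq : Q y
      · have e : φ y = y := by simp [φ, hq, h]
        rw [e]; exact ⟨le_rfl, hy, e⟩
      · have e : φ y = 0 := by simp [φ, hq, h]
        rw [e]; exact ⟨Nat.zero_le _, hA.zero, h0⟩) Q (by
    intro x
    by_cases h : x ≤ N
    · rw [hQ1 x h]
      have e : φ x = F x := if_pos h
      rw [e]
      exact ⟨fun h' => ⟨hfixA x h h', h'⟩, fun h' => h'.2⟩
    · by_cases hq : Q x
      · have e : φ x = x := by simp [φ, hq, h]
        exact ⟨fun _ => ⟨hQ2 x (by omega) hq, e⟩, fun _ => hq⟩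
      · have e : φ x = 0 := by simp [φ, hq, h]
        exact ⟨fun h => absurd h hq, fun h => by omega⟩) hQ3 hQ4
  refine ⟨_, r1, r2, fun x hx => ?_⟩
  have := hA.le x
  simp only [φ]
  rw [if_pos (by omega), hAE x hx, hFE]

theorem L2 {τ F A' A : ℕ → ℕ} {N : ℕ} (hA' : IsR τ A') (hA : IsR τ A)
    (hFA : Le F A') (hAA : Le A' A) :
    ∃ A'', IsR τ A'' ∧ Le A'' A ∧ EqN N A'' A ∧
      ∀ G, IsR τ G → Le G A'' → EqN N G F → Le G A' := by
  classical
  obtain ⟨Q, hQ1, hQ2, hQ3, hQ4⟩ := greedy τ (fun x => A' x = x) (fun x => A x = x) N hA'.types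
    (fun x _ h => hA.alt x h)
  let φ : ℕ → ℕ := fun y => if y ≤ N then y else if A' y ≤ N ∨ Q (A' y) then A' y else 0
  have hfix : ∀ y, A' y = y → A y = y := fun y h => hAA.fix hA' hA h
  have e1 : ∀ y, y ≤ N → φ y = y := fun y h => if_pos h
  have e2 : ∀ y, ¬ y ≤ N → (A' y ≤ N ∨ Q (A' y)) → φ y = A' y := fun y h h' => by
    simp only [φ]; rw [if_neg h, if_pos h']
  have e3 : ∀ y, ¬ y ≤ N → ¬ (A' y ≤ N ∨ Q (A' y)) → φ y = 0 := fun y h h' => by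
    simp only [φ]; rw [if_neg h, if_neg h']
  obtain ⟨r1, r2⟩ := mk_coarse (φ := φ) hA (by
    intro y hy
    by_cases h : y ≤ N
    · rw [e1 y h]; exact ⟨le_rfl, hy, e1 y h⟩
    · by_cases hq : A' y ≤ N ∨ Q (A' y)
      · rw [e2 y h hq]
        refine ⟨hA'.le y, hfix _ (hA'.idem y), ?_⟩
        by_cases h' : A' y ≤ N
        · exact e1 _ h'
        · rw [e2 _ h' (by rw [hA'.idem]; exact hq), hA'.idem]
      · rw [e3 y h hq]
        exact ⟨Nat.zero_le _, hA.zero, e1 0 (Nat.zero_le _)⟩) Q (by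
    intro x
    by_cases h : x ≤ N
    · rw [hQ1 x h, e1 x h]
      simp
    · constructor
      · intro hq
        have a := hQ2 x (by omega) hq
        refine ⟨hfix x a, ?_⟩
        rw [e2 x h (by rw [a]; exact Or.inr hq), a]
      · rintro ⟨a, b⟩
        by_cases hq : A' x ≤ N ∨ Q (A' x)
        · rw [e2 x h hq] at b
          rw [b] at hq
          exact hq.resolve_left h
        · rw [e3 x h hq] at b
          omega) hQ3 hQ4
  refine ⟨_, r1, r2, fun x hx => ?_, ?_⟩
  · have := hA.le x
    exact e1 _ (by omega)
  · intro G hG hGA hGF x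
    have key : ∀ x, G (φ (A x)) = G x := hGA
    have hx := key x
    by_cases h : A x ≤ N
    · rw [e1 _ h] at hx
      have l := hA'.le (A x)
      rw [hAA] at l
      rw [← hx, hGF _ h, hGF _ (by omega), ← hFA (A x), hAA]
    · by_cases hq : A' (A x) ≤ N ∨ Q (A' (A x))
      · rw [e2 _ h hq, hAA] at hx
        exact hx
      · rw [e3 _ h hq] at hx
        rw [← hx]
        have z := key (A' x)
        have a : A' (A' x) = A' x := hA'.idem x
        rw [hfix _ a] at z
        rw [hAA] at hq
        rw [e3 _ (fun hh => hq (Or.inl hh)) (by rw [a]; exact hq)] at z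
        exact z.symm

theorem fusion {τ : ℕ → ℕ} (A : ℕ → ℕ → ℕ) (hA : ∀ n, IsR τ (A n)) (h1 : ∀ n, Le (A (n + 1)) (A n))
    (h2 : ∀ n, EqN n (A (n + 1)) (A n)) (h3 : ∀ n, A n n ≠ n → A (n + 1) = A n) :
    ∃ C, IsR τ C ∧ ∀ n, Le C (A n) ∧ EqN n C (A n) := by
  have hle : ∀ n m, n ≤ m → Le (A m) (A n) ∧ EqN n (A m) (A n) := by
    intro n m h
    induction m, h using Nat.le_induction with
    | base => exact ⟨(hA n).le_self, EqN.rfl⟩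
    | succ m hm ih => exact ⟨(h1 m).trans ih.1, ((h2 m).mono hm).trans ih.2⟩
  let C : ℕ → ℕ := fun x => A x x
  have hC : ∀ n x, x ≤ n → C x = A n x := fun n x h => ((hle x n h).2 x le_rfl).symm
  refine ⟨C, ⟨fun x => (hA x).le x, fun x => ?_, ?_, ?_⟩, fun n => ⟨fun x => ?_, fun x h => hC n x h⟩⟩
  · rw [hC x x le_rfl, hC x _ ((hA x).le x), (hA x).idem]
  · refine Set.infinite_of_forall_exists_gt fun K => ?_
    by_contra hcon
    push Not at hcon
    have hst : ∀ d, A (K + 1 + d) = A (K + 1) := by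
      intro d
      induction d with
      | zero => rfl
      | succ d ih =>
        rw [← add_assoc, h3, ih]
        intro h
        have := hcon (K + 1 + d) h
        omega
    obtain ⟨x, hx, hxx, -⟩ := (hA (K + 1)).types 0 (K + 1)
    obtain ⟨d, rfl⟩ := Nat.exists_eq_add_of_le hx
    have := hcon (K + 1 + d) (by
      change A (K + 1 + d) (K + 1 + d) = _
      rw [hst]; exact hxx)
    omega
  · intro x hx
    rw [(hA x).alt x hx]
    congr 1
    apply cnt_congr
    intro y hy
    rw [hC x y (by omega)]
  · have a := (hA n).le x
    rw [hC (max n x) x (by omega), hC (max n x) (A n x) (by omega), (hle n (max n x) (by omega)).1]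

theorem enumFix {τ E : ℕ → ℕ} (hE : IsR τ E) {N : ℕ} (hN : E N = N) :
    ∃ en : ℕ → ℕ, StrictMono en ∧ (∀ i, N < en i) ∧ (∀ i, E (en i) = en i) ∧
      (∀ x, N < x → E x = x → ∃ i, x = en i) ∧
      ∀ i, cnt (fun y => E y = y) (en i) = cnt (fun y => E y = y) N + 1 + i := by
  classical
  have hc : ∀ x, cnt (fun y => E y = y) x = Nat.count (fun y => E y = y) x := by
    intro x; unfold cnt; congr
  simp only [hc]
  have hmono := Nat.nth_strictMono hE.inf
  have hnN : Nat.nth (fun y => E y = y) (Nat.count (fun y => E y = y) N) = N := Nat.nth_count hN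
  refine ⟨fun i => Nat.nth (fun y => E y = y) (Nat.count (fun y => E y = y) N + 1 + i),
    fun i j h => hmono (by omega), fun i => ?_, fun i => Nat.nth_mem_of_infinite hE.inf _, ?_,
    fun i => Nat.count_nth_of_infinite hE.inf _⟩
  · calc N = _ := hnN.symm
      _ < _ := hmono (by omega)
  · intro x hx hxx
    have h := Nat.count_strict_mono (p := fun y => E y = y) hN hx
    refine ⟨Nat.count (fun y => E y = y) x - (Nat.count (fun y => E y = y) N + 1), ?_⟩
    dsimp only
    rw [Nat.add_sub_cancel' h, Nat.nth_count (p := fun y => E y = y) hxx]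

/-- `M` is the fixed point of `G` following `N`. -/
def Nx (N M : ℕ) (G : ℕ → ℕ) : Prop := N < M ∧ G M = M ∧ ∀ x, N < x → x < M → G x ≠ x

theorem pigeon {τ E F : ℕ → ℕ} {N : ℕ} (hE : IsR τ E) (hF : IsR τ F) (hFE : Le F E) (hN : F N = N)
    (O : ℕ → (ℕ → ℕ) → Prop) (hO : ∀ M G G', EqN M G G' → O M G → O M G') :
    ∃ A, IsR τ A ∧ Le A E ∧ EqN N A E ∧
      ((∀ G M, IsR τ G → Le G A → EqN N G F → Nx N M G → O M G) ∨
       (∀ G M, IsR τ G → Le G A → EqN N G F → Nx N M G → ¬ O M G)) := by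
  classical
  have hEN : E N = N := hFE.fix hF hE hN
  obtain ⟨en, hen1, hen2, hen3, hen4, hen5⟩ := enumFix hE hEN
  let L := {y : ℕ // y ≤ N ∧ F y = y}
  have : Finite L := Set.Finite.to_subtype ((Set.finite_Iic N).subset fun y hy => hy.1)
  have : Nonempty L := ⟨⟨N, le_rfl, hN⟩⟩
  obtain ⟨m, hm⟩ : ∃ m, m = cnt (fun y => E y = y) N := ⟨_, rfl⟩
  rw [← hm] at hen5
  let C : List L → Prop := fun u => ∃ G, IsR τ G ∧ Le G E ∧ EqN N G F ∧ Nx N (en u.length) G ∧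
    (∀ i v, u[i]? = some v → G (en i) = v.1) ∧ O (en u.length) G
  obtain ⟨W, hW1, hW2, hW3, hW4⟩ := word_ph C (m + 1) (sigmaSeq (cnt (fun y => F y = y) N + 1))
  let idx : ℕ → ℕ := fun x => cnt (fun y => E y = y) x - (m + 1)
  have hidx : ∀ i, idx (en i) = i := by intro i; simp only [idx]; rw [hen5]; omega
  let φ : ℕ → ℕ := fun y => if y ≤ N then y else Sum.elim (fun l : L => l.1) en (W (idx y))
  have e1 : ∀ y ≤ N, φ y = y := fun y h => if_pos h
  have e2 : ∀ i (l : L), W i = Sum.inl l → φ (en i) = l.1 := by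
    intro i l h
    have := hen2 i
    simp only [φ]
    rw [if_neg (by omega), hidx, h]; rfl
  have e3 : ∀ i j, W i = Sum.inr j → φ (en i) = en j := by
    intro i j h
    have := hen2 i
    simp only [φ]
    rw [if_neg (by omega), hidx, h]; rfl
  let Q : ℕ → Prop := fun x => E x = x ∧ φ x = x
  have hQen : ∀ i, Q (en i) ↔ W i = Sum.inr i := by
    intro i
    constructor
    · rintro ⟨-, h⟩
      rcases hw : W i with l | j
      · rw [e2 i l hw] at h
        have := hen2 i
        have := l.2.1
        omega
      · rw [e3 i j hw] at h
        rw [hen1.injective h]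
    · intro h
      exact ⟨hen3 i, e3 i i h⟩
  have hQle : ∀ x ≤ N, Q x ↔ E x = x := fun x hx => ⟨fun h => h.1, fun h => ⟨h, e1 x hx⟩⟩
  have hcQ : ∀ j, cnt Q (en j) = m + 1 + cnt (fun i => W i = Sum.inr i) j := by
    intro j
    induction j with
    | zero =>
      rw [cnt_zero, cnt_gap (m := N + 1) (hen2 0), cnt_succ_pos (Q := Q) ((hQle N le_rfl).2 hEN), hm]
      · rw [add_zero]
        congr 1
        exact cnt_congr fun i hi => hQle i hi.le
      · intro i h1 h2 h3
        obtain ⟨k, rfl⟩ := hen4 i h1 h3.1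
        have := hen1.lt_iff_lt.1 h2
        omega
    | succ j ih =>
      have hlt : en j < en (j + 1) := hen1 (Nat.lt_succ_self j)
      rw [cnt_gap (m := en j + 1) hlt]
      · by_cases hw : W j = Sum.inr j
        · rw [cnt_succ_pos (Q := Q) ((hQen j).2 hw), ih,
            cnt_succ_pos (Q := fun i => W i = Sum.inr i) hw]
          ring
        · rw [cnt_succ_neg (Q := Q) (fun h => hw ((hQen j).1 h)), ih,
            cnt_succ_neg (Q := fun i => W i = Sum.inr i) hw]
      · intro i h1 h2 h3
        have := hen2 j
        obtain ⟨k, rfl⟩ := hen4 i (by omega) h3.1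
        have := hen1.lt_iff_lt.1 h2
        have := hen1.lt_iff_lt.1 h1
        omega
  obtain ⟨r1, r2⟩ := mk_coarse (φ := φ) hE (by
    intro y hy
    by_cases h : y ≤ N
    · rw [e1 y h]; exact ⟨le_rfl, hy, e1 y h⟩
    · obtain ⟨i, rfl⟩ := hen4 y (by omega) hy
      rcases hw : W i with l | j
      · rw [e2 i l hw]
        exact ⟨by have := l.2.1; omega, hFE.fix hF hE l.2.2, e1 _ l.2.1⟩
      · rw [e3 i j hw]
        obtain ⟨a, b⟩ := hW1 i j hw
        exact ⟨hen1.monotone a, hen3 j, e3 j j b⟩) Q (fun x => Iff.rfl)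
    (by
      refine (hW2.image hen1.injective.injOn).mono ?_
      rintro _ ⟨j, hj, rfl⟩
      exact (hQen j).2 hj)
    (by
      intro x hx
      by_cases h : x ≤ N
      · rw [hE.alt x hx.1]
        congr 1
        exact cnt_congr fun i hi => (hQle i (by omega)).symm
      · obtain ⟨j, rfl⟩ := hen4 x (by omega) hx.1
        rw [hcQ, ← hW3 j ((hQen j).1 hx), hE.alt _ hx.1, hen5])
  obtain ⟨A, hAdef⟩ : ∃ A, A = (fun x => φ (E x)) := ⟨_, rfl⟩
  have hA : ∀ x, A x = φ (E x) := fun x => by rw [hAdef]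
  rw [← hAdef] at r1 r2
  have hAN : EqN N A E := fun x hx => by
    rw [hA]; exact e1 _ ((hE.le x).trans hx)
  refine ⟨A, r1, r2, hAN, ?_⟩
  -- every extension corresponds to a word
  have main : ∀ G M, IsR τ G → Le G A → EqN N G F → Nx N M G → ∃ j, M = en j ∧ W j = Sum.inr j ∧
      sigmaSeq (m + 1 + j) = sigmaSeq (cnt (fun y => F y = y) N + 1) ∧
      ∃ α : ℕ → L, ∀ i < j, G (en i) = (Sum.elim id α (W i)).1 := by
    intro G M hG hGA hGF hNx
    obtain ⟨hNM, hGM, hnot⟩ := hNx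
    have hGE : Le G E := hGA.trans r2
    obtain ⟨j, rfl⟩ := hen4 M hNM (hGE.fix hG hE hGM)
    have hwj : W j = Sum.inr j := by
      rw [← hQen]
      refine ⟨hen3 j, ?_⟩
      have := hGA.fix hG r1 hGM
      rw [hA, hen3] at this
      exact this
    refine ⟨j, rfl, hwj, ?_, ?_⟩
    · have h1 := hE.alt _ (hen3 j)
      have h2 := hG.alt _ hGM
      rw [hen5] at h1
      rw [← h1, h2, cnt_gap (m := N + 1) hNM (fun i a b => hnot i a b),
        cnt_succ_pos (Q := fun y => G y = y) (by rw [hGF N le_rfl, hN])]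
      congr 2
      exact cnt_congr fun i hi => by rw [hGF i hi.le]
    · have hsmall : ∀ i < j, G (en i) ≤ N ∧ F (G (en i)) = G (en i) := by
        intro i hi
        have a : G (en i) ≤ N := by
          by_contra hcon
          have hl := hG.le (en i)
          have := hen1 hi
          exact hnot (G (en i)) (by omega) (by omega) (hG.idem _)
        exact ⟨a, by rw [← hGF _ a, hG.idem]⟩
      refine ⟨fun i => if h : i < j then ⟨G (en i), hsmall i h⟩ else ⟨N, le_rfl, hN⟩, ?_⟩
      intro i hi
      rw [← hGA (en i), hA, hen3]
      rcases hw : W i with l | k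
      · rw [e2 i l hw, hGF _ l.2.1, l.2.2]; rfl
      · have hk : k < j := lt_of_le_of_lt (hW1 i k hw).1 hi
        rw [e3 i k hw]
        simp [hk]
  have hword : ∀ j (α : ℕ → L), (sbst α ((List.range j).map W)).length = j := by
    intro j α; simp [sbst]
  have hget : ∀ j (α : ℕ → L) i v, (sbst α ((List.range j).map W))[i]? = some v →
      i < j ∧ v = Sum.elim id α (W i) := by
    intro j α i v h
    have hi := (List.getElem?_eq_some_iff.1 h).1
    rw [hword] at hi
    refine ⟨hi, ?_⟩
    simp [sbst, hi] at h
    exact h.symm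
  have hget2 : ∀ j (α : ℕ → L) i, i < j → (sbst α ((List.range j).map W))[i]? =
      some (Sum.elim id α (W i)) := by
    intro j α i h
    simp [sbst, h]
  rcases hW4 with hW4 | hW4
  · left
    intro G M hG hGA hGF hNx
    obtain ⟨j, rfl, hwj, hs, α, hα⟩ := main G M hG hGA hGF hNx
    obtain ⟨G', g1, g2, g3, g4, g5, g6⟩ := hW4 j hwj hs α
    rw [hword] at g4 g6
    refine hO _ _ _ ?_ g6
    intro x hx
    rcases hx.lt_or_eq with hx | rfl
    · have hGE : Le G E := hGA.trans r2
      rw [← g2 x, ← hGE x]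
      have := hE.le x
      by_cases hxN : E x ≤ N
      · rw [g3 _ hxN, hGF _ hxN]
      · obtain ⟨i, hi⟩ := hen4 (E x) (by omega) (hE.idem x)
        have hij : i < j := by
          rw [← hen1.lt_iff_lt]; omega
        rw [hi, g5 i _ (hget2 j α i hij), hα i hij]
    · rw [g4.2.1, hNx.2.1]
  · right
    intro G M hG hGA hGF hNx hOM
    obtain ⟨j, rfl, hwj, hs, α, hα⟩ := main G M hG hGA hGF hNx
    refine hW4 j hwj hs α ⟨G, hG, hGA.trans r2, hGF, ?_, ?_, ?_⟩
    · rw [hword]; exact hNx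
    · intro i v h
      obtain ⟨a, b⟩ := hget j α i v h
      rw [hα i a, b]
    · rw [hword]; exact hOM

/-! ### Part 5: the abstract Ellentuck theorem -/

/-- The space of representative functions. -/
def Sp (τ : ℕ → ℕ) : Type := {f : ℕ → ℕ // IsR τ f}

/-- Basic sets. -/
def bas {τ : ℕ → ℕ} (N : ℕ) (F A : Sp τ) : Set (Sp τ) := {G | Le G.1 A.1 ∧ EqN N G.1 F.1}

theorem mem_bas {τ : ℕ → ℕ} {N : ℕ} {F A G : Sp τ} :
    G ∈ bas N F A ↔ Le G.1 A.1 ∧ EqN N G.1 F.1 := Iff.rfl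

theorem bas_congr {τ : ℕ → ℕ} {N : ℕ} {F F' : Sp τ} (h : EqN N F.1 F'.1) (A : Sp τ) :
    bas N F A = bas N F' A := by
  ext G
  exact ⟨fun g => ⟨g.1, g.2.trans h⟩, fun g => ⟨g.1, g.2.trans h.symm⟩⟩

theorem bas_mono {τ : ℕ → ℕ} {N : ℕ} (F : Sp τ) {A A' : Sp τ} (h : Le A'.1 A.1) :
    bas N F A' ⊆ bas N F A := fun _ g => ⟨g.1.trans h, g.2⟩

theorem self_bas {τ : ℕ → ℕ} (N : ℕ) {F A : Sp τ} (h : Le F.1 A.1) : F ∈ bas N F A :=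
  ⟨h, EqN.rfl⟩

theorem Sp.exists_fix {τ : ℕ → ℕ} (G : Sp τ) (K : ℕ) : ∃ N ≥ K, G.1 N = N := by
  obtain ⟨x, h, h2, -⟩ := G.2.types 0 K
  exact ⟨x, h, h2⟩

/-- Handling all the restrictions to `[0, N]` at once. -/
theorem engine_step {τ : ℕ → ℕ} (Q : ℕ → Sp τ → Sp τ → Prop) (N : ℕ) (B : Sp τ)
    (hQe : ∀ F F' A : Sp τ, EqN N F.1 F'.1 → Q N F A → Q N F' A)
    (hQh : ∀ F A A' : Sp τ, Le A'.1 A.1 → Q N F A → Q N F A')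
    (hQd : ∀ F A : Sp τ, Le A.1 B.1 → Le F.1 A.1 → F.1 N = N →
      ∃ A' : Sp τ, Le A'.1 A.1 ∧ EqN N A'.1 A.1 ∧ Q N F A')
    (A : Sp τ) (hAB : Le A.1 B.1) :
    ∃ A' : Sp τ, Le A'.1 A.1 ∧ EqN N A'.1 A.1 ∧ ∀ F : Sp τ, Le F.1 A'.1 → F.1 N = N → Q N F A' := by
  classical
  let rs : Sp τ → Fin (N + 1) → Fin (N + 1) := fun F i => Fin.ofNat (N + 1) (F.1 i)
  have hrs : ∀ F F' : Sp τ, rs F = rs F' → EqN N F.1 F'.1 := by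
    intro F F' h x hx
    have := congrArg Fin.val (congrFun h ⟨x, by omega⟩)
    simp only [rs, Fin.ofNat] at this
    have h1 := F.2.le x
    have h2 := F'.2.le x
    rwa [Nat.mod_eq_of_lt (by omega), Nat.mod_eq_of_lt (by omega)] at this
  have key : ∀ s : Finset (Fin (N + 1) → Fin (N + 1)), ∃ A' : Sp τ, Le A'.1 A.1 ∧ EqN N A'.1 A.1 ∧
      ∀ F : Sp τ, Le F.1 A'.1 → F.1 N = N → rs F ∈ s → Q N F A' := by
    intro s
    induction s using Finset.induction_on with
    | empty => exact ⟨A, A.2.le_self, EqN.rfl, fun F _ _ h => by simp at h⟩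
    | insert t s _ ih =>
      obtain ⟨A1, a1, a2, a3⟩ := ih
      by_cases hex : ∃ F : Sp τ, Le F.1 A1.1 ∧ F.1 N = N ∧ rs F = t
      · obtain ⟨F, f1, f2, f3⟩ := hex
        obtain ⟨A2, b1, b2, b3⟩ := hQd F A1 (a1.trans hAB) f1 f2
        refine ⟨A2, b1.trans a1, b2.trans a2, fun F' g1 g2 g3 => ?_⟩
        rw [Finset.mem_insert] at g3
        rcases g3 with g3 | g3
        · exact hQe F F' A2 (hrs F F' (f3.trans g3.symm)) b3
        · exact hQh F' A1 A2 b1 (a3 F' (g1.trans b1) g2 g3)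
      · refine ⟨A1, a1, a2, fun F' g1 g2 g3 => ?_⟩
        rw [Finset.mem_insert] at g3
        rcases g3 with g3 | g3
        · exact absurd ⟨F', g1, g2, g3⟩ hex
        · exact a3 F' g1 g2 g3
  obtain ⟨A', a1, a2, a3⟩ := key Finset.univ
  exact ⟨A', a1, a2, fun F h h' => a3 F h h' (Finset.mem_univ _)⟩

theorem engine {τ : ℕ → ℕ} (Q : ℕ → Sp τ → Sp τ → Prop) (B F0 : Sp τ) (N0 : ℕ)
    (hF0 : Le F0.1 B.1) (hN0 : F0.1 N0 = N0)
    (hQe : ∀ (N : ℕ) (F F' A : Sp τ), EqN N F.1 F'.1 → Q N F A → Q N F' A)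
    (hQh : ∀ (N : ℕ) (F A A' : Sp τ), Le A'.1 A.1 → Q N F A → Q N F A')
    (hQd : ∀ (N : ℕ) (F A : Sp τ), Le A.1 B.1 → Le F.1 A.1 → F.1 N = N →
      ∃ A' : Sp τ, Le A'.1 A.1 ∧ EqN N A'.1 A.1 ∧ Q N F A') :
    ∃ C ∈ bas N0 F0 B, ∀ (N : ℕ) (F : Sp τ), N0 ≤ N → Le F.1 C.1 → F.1 N = N → Q N F C := by
  classical
  have hst := fun N A => engine_step Q N B (hQe N) (hQh N) (hQd N) A
  have : Nonempty (Sp τ) := ⟨B⟩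
  choose! st s1 s2 s3 using hst
  let A : ℕ → Sp τ := fun n => Nat.rec B (fun n a => if N0 ≤ n ∧ a.1 n = n then st n a else a) n
  have hA1 : ∀ n, A (n + 1) = if N0 ≤ n ∧ (A n).1 n = n then st n (A n) else A n := fun n => rfl
  have hAB : ∀ n, Le (A n).1 B.1 := by
    intro n
    induction n with
    | zero => exact B.2.le_self
    | succ n ih =>
      rw [hA1]
      split_ifs with h
      · exact (s1 n (A n) ih).trans ih
      · exact ih
  have hAle : ∀ n, Le (A (n + 1)).1 (A n).1 := by
    intro n
    rw [hA1]
    split_ifs with h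
    · exact s1 n (A n) (hAB n)
    · exact (A n).2.le_self
  have hAeq : ∀ n, EqN n (A (n + 1)).1 (A n).1 := by
    intro n
    rw [hA1]
    split_ifs with h
    · exact s2 n (A n) (hAB n)
    · exact EqN.rfl
  obtain ⟨C, hC, hCA⟩ := fusion (fun n => (A n).1) (fun n => (A n).2) hAle hAeq (by
    intro n h
    rw [hA1, if_neg (fun h' => h h'.2)])
  have hA0 : ∀ n ≤ N0, A n = B := by
    intro n
    induction n with
    | zero => intro _; rfl
    | succ n ih =>
      intro h
      rw [hA1, if_neg (by omega), ih (by omega)]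
  have hCB : EqN N0 C B.1 := by
    have := (hCA N0).2
    rwa [hA0 N0 le_rfl] at this
  obtain ⟨C', c1, c2, c3⟩ := L1 F0.2 B.2 hC hF0 hN0 hCB
  refine ⟨⟨C', c1⟩, ⟨c2.trans ((hCA 0).1), c3⟩, fun N F hN hF hFN => ?_⟩
  refine hQh N F ⟨C, hC⟩ _ c2 ?_
  have hFC : Le F.1 C := hF.trans c2
  have hCN : C N = N := hFC.fix F.2 hC hFN
  have hAN : (A N).1 N = N := by rw [← (hCA N).2 N le_rfl, hCN]
  have e : A (N + 1) = st N (A N) := by rw [hA1, if_pos ⟨hN, hAN⟩]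
  refine hQh N F (A (N + 1)) _ (hCA (N + 1)).1 ?_
  rw [e]
  refine s3 N (A N) (hAB N) F ?_ hFN
  rw [← e]
  exact hFC.trans (hCA (N + 1)).1

theorem L2' {τ : ℕ → ℕ} {F A' A : Sp τ} (N : ℕ) (hFA : Le F.1 A'.1) (hAA : Le A'.1 A.1) :
    ∃ A'' : Sp τ, Le A''.1 A.1 ∧ EqN N A''.1 A.1 ∧ bas N F A'' ⊆ bas N F A' := by
  obtain ⟨a, a1, a2, a3, a4⟩ := L2 (N := N) A'.2 A.2 hFA hAA
  exact ⟨⟨a, a1⟩, a2, a3, fun G hG => ⟨a4 G.1 G.2 hG.1 hG.2, hG.2⟩⟩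

instance Sp.top (τ : ℕ → ℕ) : TopologicalSpace (Sp τ) where
  IsOpen X := ∀ F ∈ X, ∃ N, F.1 N = N ∧ bas N F F ⊆ X
  isOpen_univ := fun F _ => by
    obtain ⟨N, -, h⟩ := F.exists_fix 0
    exact ⟨N, h, subset_univ _⟩
  isOpen_inter := by
    rintro X Y hX hY F ⟨h1, h2⟩
    obtain ⟨N1, a1, b1⟩ := hX F h1
    obtain ⟨N2, a2, b2⟩ := hY F h2
    rcases le_total N1 N2 with h | h
    · exact ⟨N2, a2, fun G hG => ⟨b1 ⟨hG.1, hG.2.mono h⟩, b2 hG⟩⟩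
    · exact ⟨N1, a1, fun G hG => ⟨b1 hG, b2 ⟨hG.1, hG.2.mono h⟩⟩⟩
  isOpen_sUnion := by
    rintro S hS F ⟨X, hX, hF⟩
    obtain ⟨N, a, b⟩ := hS X hX F hF
    exact ⟨N, a, b.trans (subset_sUnion_of_mem hX)⟩

theorem isOpen_iff_bas {τ : ℕ → ℕ} {X : Set (Sp τ)} :
    IsOpen X ↔ ∀ F ∈ X, ∃ N, F.1 N = N ∧ bas N F F ⊆ X := Iff.rfl

theorem isOpen_bas {τ : ℕ → ℕ} {N : ℕ} {F A : Sp τ} : IsOpen (bas N F A) := by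
  rw [isOpen_iff_bas]
  intro G hG
  obtain ⟨M, h, h'⟩ := G.exists_fix N
  exact ⟨M, h', fun H hH => ⟨hH.1.trans hG.1, (hH.2.mono h).trans hG.2⟩⟩

def Ram {τ : ℕ → ℕ} (X : Set (Sp τ)) : Prop :=
  ∀ N (F B : Sp τ), Le F.1 B.1 → F.1 N = N →
    ∃ A ∈ bas N F B, bas N A A ⊆ X ∨ bas N A A ∩ X = ∅

def RamNull {τ : ℕ → ℕ} (X : Set (Sp τ)) : Prop :=
  ∀ N (F B : Sp τ), Le F.1 B.1 → F.1 N = N → ∃ A ∈ bas N F B, bas N A A ∩ X = ∅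

def Rej {τ : ℕ → ℕ} (X : Set (Sp τ)) (N : ℕ) (F A : Sp τ) : Prop :=
  ∀ A' : Sp τ, Le A'.1 A.1 → ∀ G ∈ bas N F A', ¬ bas N F A' ⊆ X

theorem Rej.congr {τ : ℕ → ℕ} {X : Set (Sp τ)} {N : ℕ} {F F' A : Sp τ} (h : EqN N F.1 F'.1)
    (hr : Rej X N F A) : Rej X N F' A := by
  intro A' h' G hG
  rw [← bas_congr h] at hG ⊢
  exact hr A' h' G hG

theorem Rej.mono {τ : ℕ → ℕ} {X : Set (Sp τ)} {N : ℕ} {F A A' : Sp τ} (h : Le A'.1 A.1)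
    (hr : Rej X N F A) : Rej X N F A' := fun A'' h' => hr A'' (h'.trans h)

theorem exists_next {τ : ℕ → ℕ} (G : Sp τ) (N : ℕ) : ∃ M, Nx N M G.1 := by
  classical
  have h : ∃ M, N < M ∧ G.1 M = M := by
    obtain ⟨M, h, h'⟩ := G.exists_fix (N + 1)
    exact ⟨M, h, h'⟩
  refine ⟨Nat.find h, (Nat.find_spec h).1, (Nat.find_spec h).2, fun x h1 h2 h3 => ?_⟩
  exact Nat.find_min h h2 ⟨h1, h3⟩

theorem ram_of_open {τ : ℕ → ℕ} {X : Set (Sp τ)} (hX : IsOpen X) : Ram X := by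
  classical
  intro N0 F0 B hF0 hN0
  obtain ⟨C1, hC1, hd⟩ := engine (fun N F A => bas N F A ⊆ X ∨ Rej X N F A) B F0 N0 hF0 hN0
    (by
      rintro N F F' A h (h' | h')
      · left; rwa [← bas_congr h]
      · exact Or.inr (h'.congr h))
    (by
      rintro N F A A' h (h' | h')
      · exact Or.inl ((bas_mono F h).trans h')
      · exact Or.inr (h'.mono h))
    (by
      intro N F A hA hF hN
      by_cases hr : Rej X N F A
      · exact ⟨A, A.2.le_self, EqN.rfl, Or.inr hr⟩
      · unfold Rej at hr
        push Not at hr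
        obtain ⟨A', a1, G, hG, a2⟩ := hr
        obtain ⟨A'', b1, b2, b3⟩ := L2' N hG.1 a1
        refine ⟨A'', b1, b2, Or.inl ?_⟩
        rw [bas_congr hG.2, bas_congr hG.2] at b3
        exact b3.trans a2)
  have hC10 : C1.1 N0 = N0 := by rw [hC1.2 N0 le_rfl, hN0]
  obtain ⟨C2, hC2, hp⟩ := engine (fun N F A => N0 ≤ N → (bas N F A ⊆ X ∨
      ∀ G ∈ bas N F A, ∀ M, Nx N M G.1 → Rej X M G A)) C1 C1 N0 C1.2.le_self hC10
    (by
      intro N F F' A h h' hNN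
      rcases h' hNN with h' | h'
      · left; rwa [← bas_congr h]
      · right; rwa [← bas_congr h])
    (by
      intro N F A A' h h' hNN
      rcases h' hNN with h' | h'
      · exact Or.inl ((bas_mono F h).trans h')
      · exact Or.inr fun G hG M hM => (h' G (bas_mono F h hG) M hM).mono h)
    (by
      intro N F A hA hF hN
      obtain ⟨A', a1, a2, a3, a4⟩ := pigeon A.2 F.2 hF hN
        (fun M g => ∃ G : Sp τ, EqN M G.1 g ∧ bas M G C1 ⊆ X)
        (by
          rintro M g g' h ⟨G, h1, h2⟩
          exact ⟨G, h1.trans h, h2⟩)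
      refine ⟨⟨A', a1⟩, a2, a3, fun hNN => ?_⟩
      rcases a4 with a4 | a4
      · left
        intro H hH
        obtain ⟨M, hM⟩ := exists_next H N
        obtain ⟨G, g1, g2⟩ := a4 H.1 M H.2 hH.1 hH.2 hM
        exact g2 ⟨(hH.1.trans a2).trans hA, g1.symm⟩
      · right
        intro G hG M hM
        have hGC : Le G.1 C1.1 := (hG.1.trans a2).trans hA
        rcases hd M G (hNN.trans hM.1.le) hGC hM.2.1 with h | h
        · exact absurd ⟨G, EqN.rfl, h⟩ (a4 G.1 M G.2 hG.1 hG.2 hM)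
        · exact h.mono (a2.trans hA))
  have hC2B : C2 ∈ bas N0 F0 B := ⟨hC2.1.trans hC1.1, hC2.2.trans hC1.2⟩
  have hC20 : C2.1 N0 = N0 := by rw [hC2B.2 N0 le_rfl, hN0]
  refine ⟨C2, hC2B, ?_⟩
  rcases hd N0 C2 le_rfl hC2.1 hC20 with h | h
  · exact Or.inl ((bas_mono C2 hC2.1).trans h)
  right
  have h := h.mono hC2.1
  have hall : ∀ N, N0 ≤ N → ∀ G : Sp τ, G ∈ bas N0 C2 C2 → G.1 N = N → Rej X N G C2 := by
    intro N
    induction N using Nat.strong_induction_on with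
    | _ N ih =>
      intro hN G hG hGN
      rcases hN.eq_or_lt with rfl | hlt
      · exact h.congr hG.2.symm
      · have hG0 : G.1 N0 = N0 := by rw [hG.2 N0 le_rfl, hC20]
        -- the previous fixed point
        let P : ℕ → Prop := fun x => N0 ≤ x ∧ G.1 x = x
        have hP : P N0 := ⟨le_rfl, hG0⟩
        have hfs : P (Nat.findGreatest P (N - 1)) := Nat.findGreatest_spec (by omega) hP
        have hle := Nat.findGreatest_le (P := P) (N - 1)
        have hgr : ∀ x, Nat.findGreatest P (N - 1) < x → x ≤ N - 1 → ¬ P x :=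
          fun x h1 h2 => Nat.findGreatest_is_greatest h1 h2
        generalize Nat.findGreatest P (N - 1) = K at hfs hle hgr
        have hrej := ih K (by omega) hfs.1 G hG hfs.2
        rcases hp K G hfs.1 hG.1 hfs.2 hfs.1 with h' | h'
        · exact absurd h' (hrej C2 C2.2.le_self G (self_bas K hG.1))
        · refine h' G (self_bas K hG.1) N ⟨by omega, hGN, fun x h1 h2 h3 => ?_⟩
          exact hgr x h1 (by omega) ⟨hfs.1.trans h1.le, h3⟩
  rw [Set.eq_empty_iff_forall_notMem]
  rintro G ⟨hG, hGX⟩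
  obtain ⟨N, hN, hsub⟩ := isOpen_iff_bas.1 hX G hGX
  obtain ⟨M, hM, hM'⟩ := G.exists_fix (max N N0)
  refine hall M (by omega) G hG hM' G hG.1 G (self_bas M G.2.le_self) ?_
  exact fun H hH => hsub ⟨hH.1, hH.2.mono (by omega)⟩

theorem dense_open_ram {τ : ℕ → ℕ} {U : Set (Sp τ)} (hU : IsOpen U) (hd : Dense U) (N : ℕ)
    (F B : Sp τ) (hF : Le F.1 B.1) (hN : F.1 N = N) : ∃ A ∈ bas N F B, bas N A A ⊆ U := by
  obtain ⟨A, hA, h | h⟩ := ram_of_open hU N F B hF hN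
  · exact ⟨A, hA, h⟩
  · obtain ⟨x, hx⟩ := hd.inter_open_nonempty (bas N A A) isOpen_bas ⟨A, self_bas N A.2.le_self⟩
    rw [h] at hx
    exact absurd hx (Set.notMem_empty x)

theorem ramNull_of_meagre {τ : ℕ → ℕ} {X : Set (Sp τ)} (hX : IsMeagre X) : RamNull X := by
  intro N0 F0 B hF0 hN0
  rw [IsMeagre, mem_residual_iff] at hX
  obtain ⟨S, hS1, hS2, hS3, hS4⟩ := hX
  obtain ⟨U, hU⟩ : ∃ U : ℕ → Set (Sp τ), insert univ S = range U :=
    (hS3.insert univ).exists_eq_range (insert_nonempty _ _)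
  have hU1 : ∀ k, IsOpen (U k) ∧ Dense (U k) := by
    intro k
    have : U k ∈ insert univ S := hU ▸ mem_range_self k
    rcases this with h | h
    · rw [h]; exact ⟨isOpen_univ, dense_univ⟩
    · exact ⟨hS1 _ h, hS2 _ h⟩
  let V : ℕ → Set (Sp τ) := fun n => Nat.rec (U 0) (fun n v => v ∩ U (n + 1)) n
  have hV1 : ∀ n, V (n + 1) = V n ∩ U (n + 1) := fun n => rfl
  have hVU : ∀ n, V n ⊆ U n := by
    intro n
    cases n with
    | zero => exact subset_rfl
    | succ n => exact inter_subset_right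
  have hVm : ∀ n m, n ≤ m → V m ⊆ V n := by
    intro n m h
    induction m, h using Nat.le_induction with
    | base => exact subset_rfl
    | succ m _ ih => exact inter_subset_left.trans ih
  have hV : ∀ n, IsOpen (V n) ∧ Dense (V n) := by
    intro n
    induction n with
    | zero => exact hU1 0
    | succ n ih =>
      exact ⟨ih.1.inter (hU1 _).1, ih.2.inter_of_isOpen_left (hU1 _).2 ih.1⟩
  obtain ⟨C, hC, hp⟩ := engine (fun N F A => bas N F A ⊆ V N) B F0 N0 hF0 hN0
    (by intro N F F' A h h'; rwa [← bas_congr h])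
    (by intro N F A A' h h'; exact (bas_mono F h).trans h')
    (by
      intro N F A hA hF hN
      obtain ⟨A1, h1, h2⟩ := dense_open_ram (hV N).1 (hV N).2 N F A hF hN
      obtain ⟨A'', b1, b2, b3⟩ := L2' N A1.2.le_self h1.1
      refine ⟨A'', b1, b2, ?_⟩
      rw [← bas_congr h1.2]
      exact b3.trans h2)
  refine ⟨C, hC, ?_⟩
  rw [Set.eq_empty_iff_forall_notMem]
  rintro G ⟨hG, hGX⟩
  refine hS4 (a := G) ?_ hGX
  intro u hu
  have : u ∈ range U := hU ▸ mem_insert_of_mem _ hu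
  obtain ⟨k, rfl⟩ := this
  obtain ⟨N, h1, h2⟩ := G.exists_fix (max k N0)
  exact hVU k (hVm k N (by omega) (hp N G (by omega) hG.1 h2 (self_bas N hG.1)))

theorem meagre_of_ramNull {τ : ℕ → ℕ} {X : Set (Sp τ)} (hX : RamNull X) : IsMeagre X := by
  have hnd : IsNowhereDense X := by
    rw [IsNowhereDense, Set.eq_empty_iff_forall_notMem]
    intro F hF
    obtain ⟨N, hN, h⟩ := isOpen_iff_bas.1 (isOpen_interior (s := closure X)) F hF
    obtain ⟨A, hA, hd⟩ := hX N F F F.2.le_self hN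
    have hAc : A ∈ closure X := interior_subset (h hA)
    obtain ⟨x, hx⟩ := mem_closure_iff.1 hAc (bas N A A) isOpen_bas (self_bas N A.2.le_self)
    rw [hd] at hx
    exact absurd hx (Set.notMem_empty x)
  exact hnd.isMeagre

theorem ram_of_bp {τ : ℕ → ℕ} {O M : Set (Sp τ)} (hO : IsOpen O) (hM : IsMeagre M) :
    Ram ((O \ M) ∪ (M \ O)) := by
  intro N F B hF hN
  obtain ⟨A1, h1, h2⟩ := ramNull_of_meagre hM N F B hF hN
  have hN1 : A1.1 N = N := by rw [h1.2 N le_rfl, hN]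
  obtain ⟨A2, h3, h4⟩ := ram_of_open hO N A1 A1 A1.2.le_self hN1
  refine ⟨A2, ⟨h3.1.trans h1.1, h3.2.trans h1.2⟩, ?_⟩
  have hs : ∀ G ∈ bas N A2 A2, G ∉ M := by
    intro G hG hGM
    have : G ∈ bas N A1 A1 ∩ M := ⟨⟨hG.1.trans h3.1, hG.2.trans h3.2⟩, hGM⟩
    rw [h2] at this
    exact this
  rcases h4 with h4 | h4
  · exact Or.inl fun G hG => Or.inl ⟨h4 hG, hs G hG⟩
  · right
    rw [Set.eq_empty_iff_forall_notMem] at h4 ⊢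
    rintro G ⟨hG, h | h⟩
    · exact h4 G ⟨hG, h.1⟩
    · exact hs G hG h.1

theorem bp_of_ram {τ : ℕ → ℕ} {X : Set (Sp τ)} (hX : Ram X) :
    ∃ O M : Set (Sp τ), IsOpen O ∧ IsMeagre M ∧ X = (O \ M) ∪ (M \ O) := by
  refine ⟨interior X, X \ interior X, isOpen_interior, meagre_of_ramNull ?_, ?_⟩
  · intro N F B hF hN
    obtain ⟨A, hA, h | h⟩ := hX N F B hF hN
    · refine ⟨A, hA, ?_⟩
      rw [Set.eq_empty_iff_forall_notMem]
      rintro G ⟨hG, hG'⟩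
      exact hG'.2 (interior_maximal h isOpen_bas hG)
    · refine ⟨A, hA, ?_⟩
      rw [Set.eq_empty_iff_forall_notMem] at h ⊢
      rintro G ⟨hG, hG'⟩
      exact h G ⟨hG, hG'.1⟩
  · have := interior_subset (s := X)
    ext x
    have := @this x
    simp only [mem_union, mem_sdiff]
    tauto

/-! ### Part 6: transfer to equivalence relations -/

/-- Minimal representative of the class of `x`. -/
noncomputable def rep (E : Setoid ℕ) (x : ℕ) : ℕ := sInf {y | E.r x y}

theorem rep_rel (E : Setoid ℕ) (x : ℕ) : E.r x (rep E x) :=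
  Nat.sInf_mem (s := {y | E.r x y}) ⟨x, E.refl x⟩

theorem rep_le (E : Setoid ℕ) {x y : ℕ} (h : E.r x y) : rep E x ≤ y := Nat.sInf_le h

theorem rel_iff_rep (E : Setoid ℕ) (x y : ℕ) : E.r x y ↔ rep E x = rep E y := by
  constructor
  · intro h
    apply le_antisymm
    · exact rep_le E (E.trans h (rep_rel E y))
    · exact rep_le E (E.trans (E.symm h) (rep_rel E x))
  · intro h
    have := rep_rel E x
    rw [h] at this
    exact E.trans this (E.symm (rep_rel E y))

theorem rep_le_self (E : Setoid ℕ) (x : ℕ) : rep E x ≤ x := rep_le E (E.refl x)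

theorem rep_idem (E : Setoid ℕ) (x : ℕ) : rep E (rep E x) = rep E x :=
  ((rel_iff_rep E _ _).1 (rep_rel E x)).symm

theorem mem_minReps (E : Setoid ℕ) (x : ℕ) : x ∈ minReps E ↔ rep E x = x := by
  constructor
  · intro h
    exact le_antisymm (rep_le_self E x) (h _ (rep_rel E x))
  · intro h m hm
    rw [← h]
    exact rep_le E hm

theorem minReps_infinite_iff (E : Setoid ℕ) :
    (classes E).Infinite ↔ {x | rep E x = x}.Infinite := by
  have hc : classes E = (fun x => {y | E.r x y}) '' {x | rep E x = x} := by
    ext C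
    constructor
    · rintro ⟨x, rfl⟩
      refine ⟨rep E x, rep_idem E x, ?_⟩
      ext y
      exact ⟨fun h => E.trans (rep_rel E x) h, fun h => E.trans (E.symm (rep_rel E x)) h⟩
    · rintro ⟨x, -, rfl⟩
      exact ⟨x, rfl⟩
  rw [hc, Set.infinite_image_iff]
  intro x hx y hy h
  have h1 : y ∈ {z | E.r x z} := by
    have h' : {z | E.r x z} = {z | E.r y z} := h
    rw [h']; exact E.refl y
  have h2 := (rel_iff_rep E x y).1 h1
  have hx' : rep E x = x := hx
  have hy' : rep E y = y := hy
  omega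

theorem pRep_eq (E : Setoid ℕ) (k : ℕ) : pRep E k = Nat.nth (fun y => rep E y = y) k := by
  unfold pRep
  congr 1
  ext y
  exact mem_minReps E y

theorem pRep_cnt {E : Setoid ℕ} {x : ℕ} (hx : rep E x = x) :
    pRep E (cnt (fun y => rep E y = y) x) = x := by
  rw [pRep_eq]
  unfold cnt
  exact @Nat.nth_count (fun y => rep E y = y) (Classical.decPred _) x hx

theorem pRep_fix {E : Setoid ℕ} (h : {x | rep E x = x}.Infinite) (k : ℕ) :
    rep E (pRep E k) = pRep E k := by
  rw [pRep_eq]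
  exact Nat.nth_mem_of_infinite h k

theorem cnt_pRep {E : Setoid ℕ} (h : {x | rep E x = x}.Infinite) (k : ℕ) :
    cnt (fun y => rep E y = y) (pRep E k) = k := by
  rw [pRep_eq]
  unfold cnt
  exact @Nat.count_nth_of_infinite _ (Classical.decPred _) h k

theorem mem_EPalt_iff {P : ℕ → Set ℕ} {τ : ℕ → ℕ} (hτ : ∀ x i, x ∈ P i ↔ τ x = i) (E : Setoid ℕ) :
    E ∈ EPaltInf P ↔ IsR τ (rep E) := by
  constructor
  · rintro ⟨h1, h2⟩
    rw [minReps_infinite_iff] at h1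
    refine ⟨rep_le_self E, rep_idem E, h1, fun x hx => ?_⟩
    rw [← hτ]
    have := h2 (cnt (fun y => rep E y = y) x)
    rwa [pRep_cnt hx] at this
  · intro h
    refine ⟨(minReps_infinite_iff E).2 h.inf, fun k => ?_⟩
    rw [hτ, h.alt _ (pRep_fix h.inf k), cnt_pRep h.inf]

theorem rep_ker {f : ℕ → ℕ} (h1 : ∀ x, f x ≤ x) (h2 : ∀ x, f (f x) = f x) :
    rep (Setoid.ker f) = f := by
  ext x
  apply le_antisymm
  · exact rep_le _ (show f x = f (f x) from (h2 x).symm)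
  · have h : f x = f (rep (Setoid.ker f) x) := rep_rel (Setoid.ker f) x
    rw [h]
    exact h1 _

theorem ker_rep (E : Setoid ℕ) : Setoid.ker (rep E) = E := by
  ext x y
  exact (rel_iff_rep E x y).symm

theorem coarsens_iff (F E : Setoid ℕ) : Coarsens F E ↔ Le (rep F) (rep E) := by
  constructor
  · intro h x
    exact ((rel_iff_rep F _ _).1 (h _ _ (rep_rel E x))).symm
  · intro h a b hab
    rw [rel_iff_rep] at hab ⊢
    rw [← h a, ← h b, hab]

/-- The correspondence between alternating relations and representative functions. -/
noncomputable def toSp {P : ℕ → Set ℕ} {τ : ℕ → ℕ} (hτ : ∀ x i, x ∈ P i ↔ τ x = i) :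
    ↥(EPaltInf P) ≃ Sp τ where
  toFun E := ⟨rep E.1, (mem_EPalt_iff hτ E.1).1 E.2⟩
  invFun f := ⟨Setoid.ker f.1, (mem_EPalt_iff hτ _).2 (by
    rw [rep_ker f.2.le f.2.idem]; exact f.2)⟩
  left_inv E := Subtype.ext (ker_rep E.1)
  right_inv f := Subtype.ext (rep_ker f.2.le f.2.idem)

theorem approx_iff {F G : Setoid ℕ} (hF : {x | rep F x = x}.Infinite)
    (hG : {x | rep G x = x}.Infinite) (n : ℕ) :
    (∃ m, approx m G = approx n F) ↔ EqN (pRep F n) (rep G) (rep F) := by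
  have hN := pRep_fix hF n
  constructor
  · rintro ⟨m, hm⟩
    have hmem : ∀ x y, (x < pRep G m ∧ y < pRep G m ∧ G.r x y) ↔
        (x < pRep F n ∧ y < pRep F n ∧ F.r x y) := by
      intro x y
      have : (x, y) ∈ approx m G ↔ (x, y) ∈ approx n F := by rw [hm]
      exact this
    have hpp : pRep G m = pRep F n := by
      rcases lt_trichotomy (pRep G m) (pRep F n) with h | h | h
      · have := (hmem (pRep G m) (pRep G m)).2 ⟨h, h, F.refl _⟩
        omega
      · exact h
      · have := (hmem (pRep F n) (pRep F n)).1 ⟨h, h, G.refl _⟩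
        omega
    have hGN := pRep_fix hG m
    rw [hpp] at hmem hGN
    intro x hx
    rcases hx.lt_or_eq with hx | rfl
    · have a := rep_le_self G x
      have b := rep_le_self F x
      apply le_antisymm
      · exact rep_le G ((hmem x (rep F x)).2 ⟨hx, by omega, rep_rel F x⟩).2.2
      · exact rep_le F ((hmem x (rep G x)).1 ⟨hx, by omega, rep_rel G x⟩).2.2
    · rw [hGN, hN]
  · intro h
    have hGN : rep G (pRep F n) = pRep F n := by rw [h _ le_rfl, hN]
    refine ⟨cnt (fun y => rep G y = y) (pRep F n), ?_⟩
    unfold approx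
    rw [pRep_cnt hGN]
    ext ⟨x, y⟩
    change (x < _ ∧ y < _ ∧ G.r x y) ↔ (x < _ ∧ y < _ ∧ F.r x y)
    rw [rel_iff_rep, rel_iff_rep]
    constructor
    · rintro ⟨a, b, c⟩
      exact ⟨a, b, by rw [← h x a.le, ← h y b.le, c]⟩
    · rintro ⟨a, b, c⟩
      exact ⟨a, b, by rw [h x a.le, h y b.le, c]⟩

section
variable {P : ℕ → Set ℕ} {τ : ℕ → ℕ} (hτ : ∀ x i, x ∈ P i ↔ τ x = i)

theorem basicSet_eq (F B : ↥(EPaltInf P)) (n : ℕ) :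
    basicSet (EPaltInf P) (approx n F.1) B =
      toSp hτ ⁻¹' bas (pRep F.1 n) (toSp hτ F) (toSp hτ B) := by
  ext G
  have h1 := coarsens_iff G.1 B.1
  have h2 := approx_iff (toSp hτ F).2.inf (toSp hτ G).2.inf n
  exact and_congr h1 h2

theorem ellentuckTop_eq : ellentuckTop (EPaltInf P) = (Sp.top τ).induced (toSp hτ) := by
  apply le_antisymm
  · rintro U ⟨V, hV, rfl⟩
    rw [@isOpen_iff_forall_mem_open _ (ellentuckTop (EPaltInf P))]
    intro F hF
    obtain ⟨N, hN, h⟩ := isOpen_iff_bas.1 hV (toSp hτ F) hF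
    have e := basicSet_eq hτ F F (cnt (fun y => rep F.1 y = y) N)
    rw [pRep_cnt hN] at e
    refine ⟨basicSet (EPaltInf P) (approx (cnt (fun y => rep F.1 y = y) N) F.1) F, ?_,
      TopologicalSpace.isOpen_generateFrom_of_mem ⟨_, _, rfl⟩, ?_⟩
    · rw [e]; exact preimage_mono h
    · rw [e]; exact self_bas N (toSp hτ F).2.le_self
  · apply le_generateFrom
    rintro U ⟨a, B, rfl⟩
    rcases (basicSet (EPaltInf P) a B).eq_empty_or_nonempty with h | ⟨F, hF, n, rfl⟩
    · rw [h]; exact @isOpen_empty _ (_)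
    · rw [basicSet_eq hτ]
      exact ⟨_, isOpen_bas, rfl⟩

theorem isOpen_transfer (U : Set ↥(EPaltInf P)) :
    (ellentuckTop (EPaltInf P)).IsOpen U ↔ IsOpen ((toSp hτ).symm ⁻¹' U) := by
  rw [ellentuckTop_eq hτ]
  constructor
  · rintro ⟨V, hV, rfl⟩
    rw [← preimage_comp]
    simpa using hV
  · intro h
    refine ⟨_, h, ?_⟩
    rw [← preimage_comp]
    simp

theorem isMeagre_transfer (X : Set ↥(EPaltInf P)) :
    @IsMeagre _ (ellentuckTop (EPaltInf P)) X ↔ IsMeagre ((toSp hτ).symm ⁻¹' X) := by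
  letI := ellentuckTop (EPaltInf P)
  let e : ↥(EPaltInf P) ≃ₜ Sp τ := (toSp hτ).toHomeomorphOfIsInducing ⟨ellentuckTop_eq hτ⟩
  constructor
  · intro h
    exact h.preimage_of_isOpenMap e.symm.continuous e.symm.isOpenMap
  · intro h
    have := h.preimage_of_isOpenMap e.continuous e.isOpenMap
    convert this using 1
    ext x
    simp [e]

theorem ramsey_aux (R : Set ↥(EPaltInf P) → Prop) :
    (∀ (a : Set (ℕ × ℕ)) (B : ↥(EPaltInf P)), (basicSet (EPaltInf P) a B).Nonempty →
      ∃ A ∈ basicSet (EPaltInf P) a B, R (basicSet (EPaltInf P) a A)) ↔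
    ∀ N (F B : Sp τ), Le F.1 B.1 → F.1 N = N →
      ∃ A ∈ bas N F B, R (toSp hτ ⁻¹' bas N A A) := by
  constructor
  · intro h N F B hF hN
    obtain ⟨F', rfl⟩ := (toSp hτ).surjective F
    obtain ⟨B', rfl⟩ := (toSp hτ).surjective B
    have e := fun A => basicSet_eq hτ F' A (cnt (fun y => rep F'.1 y = y) N)
    rw [pRep_cnt hN] at e
    obtain ⟨A, hA, hR⟩ := h (approx (cnt (fun y => rep F'.1 y = y) N) F'.1) B'
      ⟨F', by rw [e]; exact self_bas N hF⟩
    rw [e] at hA hR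
    refine ⟨toSp hτ A, hA, ?_⟩
    rwa [bas_congr hA.2]
  · rintro h a B ⟨F, hF, n, rfl⟩
    have e := fun A => basicSet_eq hτ F A n
    obtain ⟨A, hA, hR⟩ := h (pRep F.1 n) (toSp hτ F) (toSp hτ B) ((coarsens_iff _ _).1 hF)
      (pRep_fix (toSp hτ F).2.inf n)
    obtain ⟨A', rfl⟩ := (toSp hτ).surjective A
    refine ⟨A', by rw [e]; exact hA, ?_⟩
    rwa [e, ← bas_congr hA.2]

theorem pre_disj (T : Set (Sp τ)) (X : Set ↥(EPaltInf P)) :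
    toSp hτ ⁻¹' T ∩ X = ∅ ↔ T ∩ (toSp hτ).symm ⁻¹' X = ∅ := by
  simp only [Set.eq_empty_iff_forall_notMem]
  constructor
  · intro h x hx
    exact h ((toSp hτ).symm x) ⟨by simpa using hx.1, hx.2⟩
  · intro h x hx
    exact h (toSp hτ x) ⟨hx.1, by simpa using hx.2⟩

theorem pre_sub (T : Set (Sp τ)) (X : Set ↥(EPaltInf P)) :
    toSp hτ ⁻¹' T ⊆ X ↔ T ⊆ (toSp hτ).symm ⁻¹' X := by
  constructor
  · intro h x hx
    exact h (show toSp hτ ((toSp hτ).symm x) ∈ T by simpa using hx)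
  · intro h x hx
    have := h (show toSp hτ x ∈ T from hx)
    simpa using this

theorem isRamsey_transfer (X : Set ↥(EPaltInf P)) :
    IsRamsey (EPaltInf P) X ↔ Ram ((toSp hτ).symm ⁻¹' X) := by
  have := ramsey_aux hτ (fun S => S ⊆ X ∨ S ∩ X = ∅)
  simp only [pre_disj, pre_sub] at this
  exact this

theorem isRamseyNull_transfer (X : Set ↥(EPaltInf P)) :
    IsRamseyNull (EPaltInf P) X ↔ RamNull ((toSp hτ).symm ⁻¹' X) := by
  have := ramsey_aux hτ (fun S => S ∩ X = ∅)
  simp only [pre_disj] at this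
  exact this

end

/-- **Theorem 5.1:** for an infinite partition `P`, `(𝓔^P_∞, ≤, r)` is a topological
Ramsey space: a set `𝓧 ⊆ 𝓔^P_∞` has the property of Baire with respect to the
Ellentuck topology iff it is Ramsey, and it is Ellentuck-meagre iff it is Ramsey null. -/
theorem EPaltInfIsTopologicalRamseySpace
    (P : ℕ → Set ℕ)
    (hinf : ∀ i, (P i).Infinite)
    (hdisj : ∀ i j, i ≠ j → Disjoint (P i) (P j))
    (hcov : ⋃ i, P i = Set.univ)
    (hmin : ∀ i j : ℕ, i < j → sInf (P i) < sInf (P j))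
    (X : Set ↥(EPaltInf P)) :
    (HasBP (EPaltInf P) X ↔ IsRamsey (EPaltInf P) X) ∧
    (@IsMeagre _ (ellentuckTop (EPaltInf P)) X ↔ IsRamseyNull (EPaltInf P) X) := by
  have hex : ∀ x, ∃ i, x ∈ P i := by
    intro x
    have : x ∈ ⋃ i, P i := by rw [hcov]; exact mem_univ x
    exact mem_iUnion.1 this
  choose τ hτ0 using hex
  have hτ : ∀ x i, x ∈ P i ↔ τ x = i := by
    intro x i
    constructor
    · intro h
      by_contra hne
      exact Set.disjoint_left.1 (hdisj _ _ hne) (hτ0 x) h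
    · rintro rfl
      exact hτ0 x
  constructor
  · rw [isRamsey_transfer hτ]
    constructor
    · rintro ⟨O, M, hO, hM, rfl⟩
      rw [isOpen_transfer hτ] at hO
      rw [isMeagre_transfer hτ] at hM
      exact ram_of_bp hO hM
    · intro h
      obtain ⟨O, M, hO, hM, hX⟩ := bp_of_ram h
      have hback : ∀ S : Set (Sp τ), (toSp hτ).symm ⁻¹' (toSp hτ ⁻¹' S) = S := by
        intro S; ext x; simp
      refine ⟨toSp hτ ⁻¹' O, toSp hτ ⁻¹' M, ?_, ?_, ?_⟩
      · rw [isOpen_transfer hτ, hback]; exact hO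
      · rw [isMeagre_transfer hτ, hback]; exact hM
      · have : X = toSp hτ ⁻¹' ((toSp hτ).symm ⁻¹' X) := by ext x; simp
        rw [this, hX]; rfl
  · rw [isRamseyNull_transfer hτ, isMeagre_transfer hτ]
    exact ⟨ramNull_of_meagre, meagre_of_ramNull⟩

end DualRamsey
end

section
/- Let P = {P_n : n < ω} be a partition of ω into infinitely many infinite sets with min P_i < min P_j whenever i < j. Let E ∈ 𝓔^P_∞, let n < ω, set a = r_n(E), and let 𝓞 be any set of approximations of length n+1 (restrictions r_{n+1}(G) of members G of 𝓔^P_∞). Then there exists F ∈ [a,E] such that either r_{n+1}(G) ∈ 𝓞 for every G ∈ [a,F], or r_{n+1}(G) ∉ 𝓞 for every G ∈ [a,F]. -/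
open Set

namespace DualRamsey

/-- fill in the variable by `b` -/
def osub {A : Type*} (b : A) (o : Option A) : A := o.getD b

section Algebra

/-- A minimal idempotent of a compact right topological semigroup. -/
lemma exists_minimal_idempotent {M : Type*} [Nonempty M] [Semigroup M]
    [TopologicalSpace M] [CompactSpace M] [T2Space M]
    (hc : ∀ r : M, Continuous (· * r)) :
    ∃ u : M, u * u = u ∧ ∀ x : M, ∃ s : M, s * (x * u) = u := by
  let S : Set (Set M) := { N | IsClosed N ∧ N.Nonempty ∧ ∀ m, ∀ m' ∈ N, m * m' ∈ N }
  obtain ⟨N, hN⟩ : ∃ N', Minimal (· ∈ S) N' := by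
    refine zorn_superset _ fun c hcs hch => ?_
    refine
      ⟨⋂₀ c, ⟨isClosed_sInter fun t ht => (hcs ht).1, ?_, fun m m' hm' => ?_⟩, fun s hs =>
        Set.sInter_subset_of_mem hs⟩
    · obtain rfl | hcnemp := c.eq_empty_or_nonempty
      · rw [Set.sInter_empty]
        apply Set.univ_nonempty
      convert!
        @IsCompact.nonempty_iInter_of_directed_nonempty_isCompact_isClosed _ _ _ hcnemp.coe_sort
          ((↑) : c → Set M) ?_ ?_ ?_ ?_
      · exact Set.sInter_eq_iInter
      · refine DirectedOn.directed_val (IsChain.directedOn hch.symm)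
      exacts [fun i => (hcs i.prop).2.1, fun i => (hcs i.prop).1.isCompact,
        fun i => (hcs i.prop).1]
    · rw [Set.mem_sInter]
      exact fun t ht => (hcs ht).2.2 m m' (Set.mem_sInter.mp hm' t ht)
  obtain ⟨N_closed, hne, N_mul⟩ := hN.prop
  obtain ⟨u, huN, huu⟩ := exists_idempotent_in_compact_subsemigroup hc N hne N_closed.isCompact
    (fun x _ y hy => N_mul x y hy)
  refine ⟨u, huu, fun x => ?_⟩
  have hxu : x * u ∈ N := N_mul x u huN
  have : Set.range (· * (x * u)) = N := by
    apply hN.eq_of_subset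
    · refine ⟨(isCompact_range (hc _)).isClosed, ⟨_, ⟨u, rfl⟩⟩, ?_⟩
      rintro m _ ⟨m', rfl⟩
      exact ⟨m * m', mul_assoc _ _ _⟩
    · rintro _ ⟨m', rfl⟩
      exact N_mul _ _ hxu
  rw [← this] at huN
  exact huN

attribute [local instance] Ultrafilter.semigroup

open Filter

lemma ultrafilter_map_mul_s14 {M N : Type*} [Semigroup M] [Semigroup N] (φ : M → N)
    (hφ : ∀ a b, φ (a * b) = φ a * φ b) (U V : Ultrafilter M) :
    Ultrafilter.map φ (U * V) = Ultrafilter.map φ U * Ultrafilter.map φ V := by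
  apply Ultrafilter.coe_inj.mp
  apply Filter.ext'
  intro p
  rw [Ultrafilter.eventually_mul]
  simp only [Ultrafilter.coe_map, Filter.eventually_map, Ultrafilter.eventually_mul, hφ]

lemma exists_ultrafilter_abs {M N B : Type*} [Semigroup M] [Semigroup N] [Nonempty M]
    (ι : M → N)
    (φ : B → N → M) (hφ : ∀ i, ∀ a b, φ i (a * b) = φ i a * φ i b)
    (hφι : ∀ i a, φ i (ι a) = a) :
    ∃ u : Ultrafilter M, u * u = u ∧ ∀ e : N, ∃ q : Ultrafilter N,
      ∀ b, u * (pure (φ b e) * Ultrafilter.map (φ b) q) = u := by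
  obtain ⟨u, huu, hu⟩ := exists_minimal_idempotent (M := Ultrafilter M)
    Ultrafilter.continuous_mul_left
  refine ⟨u, huu, fun e => ?_⟩
  set U : Ultrafilter N := Ultrafilter.map ι u with hU
  have hbU : ∀ b, Ultrafilter.map (φ b) U = u := by
    intro b
    rw [hU, Ultrafilter.map_map]
    have : φ b ∘ ι = id := by
      funext a
      exact hφι b a
    rw [this, Ultrafilter.map_id]
  have hm := fun b => ultrafilter_map_mul_s14 (φ b) (hφ b)
  set r : Ultrafilter N := U * pure e * U with hr
  obtain ⟨f, ⟨s, hs⟩, hff⟩ := exists_idempotent_in_compact_subsemigroup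
    (M := Ultrafilter N) Ultrafilter.continuous_mul_left (Set.range (· * r)) ⟨_, ⟨r, rfl⟩⟩
    (isCompact_range (Ultrafilter.continuous_mul_left r)) (by
      rintro x - _ ⟨y, rfl⟩
      exact ⟨x * y, mul_assoc _ _ _⟩)
  refine ⟨U * s * U, fun b => ?_⟩
  have hpure : Ultrafilter.map (φ b) (pure e) = pure (φ b e) := by
    simp
  set E := (pure (φ b e) : Ultrafilter M) with hE
  set t := Ultrafilter.map (φ b) s with ht
  have hrb : Ultrafilter.map (φ b) r = u * E * u := by
    rw [hr, hm, hm, hbU, hpure]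
  have hfb : Ultrafilter.map (φ b) f = t * (u * E * u) := by
    rw [← hs, hm, hrb]
  have hfbi : (t * (u * E * u)) * (t * (u * E * u)) = t * (u * E * u) := by
    rw [← hfb, ← hm, hff]
  have h1 : u * (t * (u * E * u)) = u := by
    obtain ⟨s', hs'⟩ := hu (t * (u * E))
    have e1 : t * (u * E) * u = t * (u * E * u) := by simp only [mul_assoc]
    rw [e1] at hs'
    calc u * (t * (u * E * u)) = (s' * (t * (u * E * u))) * (t * (u * E * u)) := by rw [hs']
      _ = u := by rw [mul_assoc, hfbi, hs']
  obtain ⟨h, hh⟩ := hu (u * t)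
  rw [hm, hm, hbU]
  have hu2 : ∀ x, u * (u * x) = u * x := fun x => by rw [← mul_assoc, huu]
  simp only [mul_assoc] at h1 hh ⊢
  calc u * (E * (u * (t * u))) = (h * (u * (t * u))) * (E * (u * (t * u))) := by rw [hh]
    _ = h * ((u * (t * (u * (E * u)))) * (t * u)) := by simp only [mul_assoc]
    _ = u := by rw [h1, hh]

lemma exists_ultrafilter_words (A : Type*) [Nonempty A] :
    ∃ u : Ultrafilter (List A),
      (∀ p : List A → Prop, (∀ᶠ w in u, p w) ↔ ∀ᶠ a in u, ∀ᶠ b in u, p (a ++ b)) ∧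
      ∀ e : List (Option A), ∃ q : Ultrafilter (List (Option A)), ∀ (b : A) (p : List A → Prop),
        (∀ᶠ w in u, p w) →
          ∀ᶠ w in u, ∀ᶠ v : List (Option A) in q, p (w ++ (e.map (osub b) ++ v.map (osub b))) := by
  obtain ⟨u, huu, hu⟩ := exists_ultrafilter_abs (M := FreeMonoid A) (N := FreeMonoid (Option A))
    (B := A) (FreeMonoid.map some)
    (fun b => FreeMonoid.map (osub b)) (fun i a b => map_mul _ a b) (by
      intro i a
      rw [FreeMonoid.map_map]
      exact congrFun (congrArg _ (FreeMonoid.map_id)) a)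
  refine ⟨u, ?_, ?_⟩
  · intro p
    conv_lhs => rw [← huu]
    exact Ultrafilter.eventually_mul u u p
  · intro e
    obtain ⟨q, hq⟩ := hu e
    refine ⟨q, fun b p hp => ?_⟩
    rw [← hq b] at hp
    exact hp

end Algebra

section Sigma

lemma sigmaSeq_add (i N t : ℕ) (h : i + 1 < 2 ^ N) : sigmaSeq (i + 2 ^ N * t) = sigmaSeq i := by
  unfold sigmaSeq
  apply eq_of_forall_le_iff
  intro n
  rw [← padicValNat_dvd_iff_le (by omega), ← padicValNat_dvd_iff_le (by omega)]
  have e : i + 2 ^ N * t + 1 = (i + 1) + 2 ^ N * t := by ring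
  rw [e]
  rcases le_total n N with hn | hn
  · exact (Nat.dvd_add_iff_left ((pow_dvd_pow 2 hn).mul_right t)).symm
  · have hN : ¬ 2 ^ N ∣ i + 1 := fun hd => absurd (Nat.le_of_dvd (by omega) hd) (by omega)
    constructor
    · intro hd
      exfalso
      apply hN
      exact (Nat.dvd_add_iff_left (Dvd.intro t rfl)).mpr ((pow_dvd_pow 2 hn).trans hd)
    · intro hd
      exact absurd ((pow_dvd_pow 2 hn).trans hd) hN

lemma exists_sigmaSeq_ge (k B : ℕ) : ∃ i, B ≤ i ∧ sigmaSeq i = sigmaSeq k := by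
  refine ⟨k + 2 ^ (k + 1) * B, ?_, sigmaSeq_add _ _ _ Nat.lt_two_pow_self⟩
  have : 0 < 2 ^ (k + 1) := by positivity
  nlinarith

end Sigma

section Fusion

open Filter

lemma length_dvd {A : Type*} (u : Ultrafilter (List A))
    (hu : ∀ p : List A → Prop, (∀ᶠ w in u, p w) ↔ ∀ᶠ a in u, ∀ᶠ b in u, p (a ++ b)) (N : ℕ) :
    ∀ᶠ w : List A in u, 2 ^ N ∣ w.length := by
  have : NeZero (2 ^ N) := ⟨by positivity⟩
  obtain ⟨c, hc⟩ := Ultrafilter.eq_pure_of_finite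
    (Ultrafilter.map (fun w : List A => (w.length : ZMod (2 ^ N))) u)
  have h1 : ∀ᶠ w : List A in u, (w.length : ZMod (2 ^ N)) = c := by
    have : ∀ᶠ x in (Ultrafilter.map (fun w : List A => (w.length : ZMod (2 ^ N))) u : Filter _),
        x = c := by
      rw [hc]; simp
    simpa using this
  have h2 := (hu _).1 h1
  have h3 : ∀ᶠ w : List A in u, c = 0 := by
    filter_upwards [h1, h2] with a ha hb
    obtain ⟨b, hb, hb'⟩ := (hb.and h1).exists
    simp only [List.length_append, Nat.cast_add, ha, hb'] at hb
    simpa using hb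
  obtain ⟨_, hc0⟩ := h3.exists
  filter_upwards [h1] with w hw
  rw [hc0] at hw
  exact (ZMod.natCast_eq_zero_iff _ _).1 hw

/-- substitutions fixing the constant letters -/
def OkSub (n : ℕ) (h : ℕ → Fin (n + 1)) : Prop := ∀ i : Fin (n + 1), h i = i

lemma fusion_step (n : ℕ) (D : List (Fin (n + 1)) → Prop)
    (u : Ultrafilter (List (Fin (n + 1))))
    (hu : ∀ p : List (Fin (n + 1)) → Prop,
      (∀ᶠ w in u, p w) ↔ ∀ᶠ a in u, ∀ᶠ b in u, p (a ++ b))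
    (hq : ∀ e : List (Option (Fin (n + 1))), ∃ q : Ultrafilter (List (Option (Fin (n + 1)))),
      ∀ (b : Fin (n + 1)) (p : List (Fin (n + 1)) → Prop), (∀ᶠ w in u, p w) →
          ∀ᶠ w in u, ∀ᶠ v : List (Option (Fin (n + 1))) in q,
            p (w ++ (e.map (osub b) ++ v.map (osub b))))
    (hD : ∀ Y, D Y → sigmaSeq Y.length = sigmaSeq (n + 1))
    (k : ℕ) (hk : n < k) (X : List ℕ) (hX : ∀ y ∈ X, y < k)
    (hI : ∀ h, OkSub n h → ∀ᶠ w in u, D (X.map h ++ w)) :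
    ∃ X' : List ℕ, ((∀ y ∈ X', y < k + 1) ∧
        (∀ h, OkSub n h → ∀ᶠ w in u, D (X'.map h ++ w))) ∧ X <+: X' ∧
      ∃ f, X.length ≤ f ∧ f < X'.length ∧ X'[f]? = some k ∧ sigmaSeq f = sigmaSeq k ∧
        (∀ y ∈ X'.take f, y < k) ∧
        (sigmaSeq k = sigmaSeq (n + 1) → ∀ h, OkSub n h → D ((X'.take f).map h)) := by
  obtain ⟨i, hi, hik, hi'⟩ : ∃ i, X.length ≤ i ∧ sigmaSeq i = sigmaSeq k ∧
      True := by
    obtain ⟨i, h1, h2⟩ := exists_sigmaSeq_ge k X.length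
    exact ⟨i, h1, h2, trivial⟩
  obtain ⟨l, hl1, hl2⟩ : ∃ l, (sigmaSeq k = sigmaSeq (n + 1) → l = 0) ∧
      (sigmaSeq k ≠ sigmaSeq (n + 1) → X.length + l = i) := by
    by_cases h : sigmaSeq k = sigmaSeq (n + 1)
    · exact ⟨0, fun _ => rfl, fun h' => absurd h h'⟩
    · exact ⟨i - X.length, fun h' => absurd h' h, fun _ => by omega⟩
  obtain ⟨q, hq⟩ := hq (List.replicate l (some (0 : Fin (n + 1))) ++ [none])
  let 𝒴 : Set (List (Fin (n + 1))) := {Y | ∃ h, OkSub n h ∧ Y = X.map h}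
  have h𝒴 : 𝒴.Finite := by
    refine (List.finite_length_eq (Fin (n + 1)) X.length).subset ?_
    rintro Y ⟨h, -, rfl⟩
    simp
  have hI' : ∀ Y ∈ 𝒴, ∀ᶠ w in u, D (Y ++ w) := by
    rintro Y ⟨h, hh, rfl⟩
    exact hI h hh
  have E1 : ∀ᶠ w in u, ∀ Y ∈ 𝒴, D (Y ++ w) := (eventually_all_finite h𝒴).2 hI'
  have E2 : ∀ᶠ w in u, ∀ Y ∈ 𝒴, ∀ b : Fin (n + 1), ∀ᶠ v : List (Option (Fin (n + 1))) in q,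
      ∀ᶠ w' in u, D (Y ++ (w ++ ((List.replicate l (some (0 : Fin (n + 1))) ++ [none]).map (osub b) ++
        v.map (osub b))) ++ w') := by
    refine (eventually_all_finite h𝒴).2 fun Y hY => eventually_all.2 fun b => ?_
    refine hq b (fun z => ∀ᶠ w' in u, D (Y ++ z ++ w')) ?_
    have := (hu _).1 (hI' Y hY)
    simpa only [List.append_assoc] using this
  obtain ⟨w, ⟨hw1, hw2⟩, hw3⟩ := ((E1.and E2).and (length_dvd u hu (i + 1))).exists
  obtain ⟨v, hv⟩ : ∃ v : List (Option (Fin (n + 1))), ∀ Y ∈ 𝒴, ∀ b : Fin (n + 1),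
      ∀ᶠ w' in u, D (Y ++ (w ++ ((List.replicate l (some (0 : Fin (n + 1))) ++ [none]).map (osub b) ++
        v.map (osub b))) ++ w') :=
    (((eventually_all_finite h𝒴).2 fun Y hY => eventually_all.2 fun b => hw2 Y hY b) :
      ∀ᶠ v in q, _).exists
  let T : List ℕ := X ++ w.map Fin.val ++ List.replicate l 0
  let V : List ℕ := v.map (fun o => o.elim k Fin.val)
  have hTlen : T.length = X.length + w.length + l := by simp [T, add_assoc]
  have hTk : ∀ y ∈ T, y < k := by
    intro y hy
    simp only [T, List.mem_append, List.mem_map, List.mem_replicate] at hy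
    rcases hy with (hy | ⟨a, -, rfl⟩) | ⟨-, rfl⟩
    · exact hX y hy
    · have := a.2
      omega
    · omega
  have htake : (T ++ k :: V).take T.length = T := by simp
  have hwmap : ∀ h, OkSub n h → (w.map Fin.val).map h = w := by
    intro h hh
    rw [List.map_map]
    conv_rhs => rw [← List.map_id w]
    exact List.map_congr_left fun a _ => hh a
  refine ⟨T ++ k :: V, ⟨?_, ?_⟩, ?_, T.length, ?_, ?_, ?_, ?_, ?_, ?_⟩
  · intro y hy
    simp only [List.mem_append, List.mem_cons, V, List.mem_map] at hy
    rcases hy with hy | rfl | ⟨o, -, rfl⟩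
    · have := hTk y hy
      omega
    · omega
    · cases o with
      | none => simp
      | some a =>
        have := a.2
        simp only [Option.elim_some]
        omega
  · intro h hh
    have := hv (X.map h) ⟨h, hh, rfl⟩ (h k)
    have e : (T ++ k :: V).map h = X.map h ++ (w ++ ((List.replicate l (some (0 : Fin (n + 1))) ++ [none]).map
        (osub (h k)) ++ v.map (osub (h k)))) := by
      have h0 : h 0 = 0 := hh 0
      simp only [T, V, List.map_append, List.map_cons, hwmap h hh, List.map_replicate,
        List.append_assoc, h0, List.map_nil, osub, Option.getD_some, Option.getD_none,
        List.cons_append, List.nil_append, List.map_map]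
      congr 5
      funext o
      cases o with
      | none => simp [osub]
      | some a => simpa [osub] using hh a
    rw [e]
    exact this
  · simp only [T, List.append_assoc]
    exact List.prefix_append _ _
  · omega
  · simp
  · simp
  · by_cases hs : sigmaSeq k = sigmaSeq (n + 1)
    · have hl := hl1 hs
      have := hD _ (hw1 (X.map (fun j => Fin.ofNat (n + 1) j)) ⟨_, fun i => by simp, rfl⟩)
      simp only [List.length_append, List.length_map] at this
      rw [hTlen, hl, add_zero, this, hs]
    · have hl := hl2 hs
      obtain ⟨t, ht⟩ := hw3
      have : T.length = i + 2 ^ (i + 1) * t := by omega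
      rw [this, sigmaSeq_add _ _ _ Nat.lt_two_pow_self, hik]
  · rw [htake]; exact hTk
  · intro hs h hh
    have hl := hl1 hs
    rw [htake]
    have := hw1 (X.map h) ⟨h, hh, rfl⟩
    simpa [T, hl, hwmap h hh] using this

end Fusion

section Core

open Filter

lemma core (n : ℕ) (col : List (Fin (n + 1)) → Prop) :
    ∃ (g f : ℕ → ℕ) (c : Prop), (∀ i ≤ n, g i = i) ∧ (∀ j ≤ n, f j = j) ∧ StrictMono f ∧
      (∀ j, g (f j) = j) ∧ (∀ j, ∀ i < f j, g i < j) ∧ (∀ j, sigmaSeq (f j) = sigmaSeq j) ∧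
      ∀ h, OkSub n h → ∀ k, n < k → sigmaSeq k = sigmaSeq (n + 1) →
        (col ((List.range (f k)).map (fun i => h (g i))) ↔ c) := by
  obtain ⟨u, hu, hq⟩ := exists_ultrafilter_words (Fin (n + 1))
  obtain ⟨c, hc⟩ : ∃ c : Prop, ∀ᶠ w in u, (col (List.ofFn id ++ w) ↔ c) := by
    rcases Ultrafilter.em u (fun w => col (List.ofFn id ++ w)) with h | h
    · exact ⟨True, by simpa using h⟩
    · exact ⟨False, by simpa using h⟩
  let D : List (Fin (n + 1)) → Prop :=
    fun Y => (col Y ↔ c) ∧ sigmaSeq Y.length = sigmaSeq (n + 1)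
  have hD : ∀ Y, D Y → sigmaSeq Y.length = sigmaSeq (n + 1) := fun Y h => h.2
  have hbase : ∀ᶠ w in u, D (List.ofFn id ++ w) := by
    filter_upwards [hc, length_dvd u hu (n + 2)] with w h1 h2
    refine ⟨h1, ?_⟩
    obtain ⟨t, ht⟩ := h2
    rw [List.length_append, List.length_ofFn, ht]
    exact sigmaSeq_add _ _ _ Nat.lt_two_pow_self
  let Inv : ℕ → List ℕ → Prop := fun t X => (∀ y ∈ X, y < n + 1 + t) ∧
    ∀ h, OkSub n h → ∀ᶠ w in u, D (X.map h ++ w)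
  have h0 : Inv 0 (List.range (n + 1)) := by
    refine ⟨fun y hy => by simpa using hy, fun h hh => ?_⟩
    have : (List.range (n + 1)).map h = List.ofFn id := by
      apply List.ext_getElem
      · simp
      · intro i h1 h2
        simp only [List.length_ofFn] at h2
        rw [List.getElem_map, List.getElem_range, List.getElem_ofFn]
        exact hh ⟨i, h2⟩
    rw [this]
    exact hbase
  have step : ∀ t, ∀ X : {X // Inv t X}, ∃ X' : {X // Inv (t + 1) X}, X.1 <+: X'.1 ∧
      ∃ f, X.1.length ≤ f ∧ f < X'.1.length ∧ X'.1[f]? = some (n + 1 + t) ∧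
        sigmaSeq f = sigmaSeq (n + 1 + t) ∧
        (∀ y ∈ X'.1.take f, y < n + 1 + t) ∧
        (sigmaSeq (n + 1 + t) = sigmaSeq (n + 1) →
          ∀ h, OkSub n h → D ((X'.1.take f).map h)) := by
    rintro t ⟨X, hX1, hX2⟩
    obtain ⟨X', hI, h⟩ := fusion_step n D u hu hq hD (n + 1 + t) (by omega) X hX1 hX2
    exact ⟨⟨X', hI⟩, h⟩
  choose nx hpre fp hf1 hf2 hf3 hf4 hf5 hf6 using step
  let XS : (t : ℕ) → {X // Inv t X} := fun t => Nat.rec ⟨_, h0⟩ (fun t X => nx t X) t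
  have hXS0 : (XS 0).1 = List.range (n + 1) := rfl
  let F : ℕ → ℕ := fun t => fp t (XS t)
  replace hpre : ∀ t, (XS t).1 <+: (XS (t + 1)).1 := fun t => hpre t (XS t)
  replace hf1 : ∀ t, (XS t).1.length ≤ F t := fun t => hf1 t (XS t)
  replace hf2 : ∀ t, F t < (XS (t + 1)).1.length := fun t => hf2 t (XS t)
  replace hf3 : ∀ t, (XS (t + 1)).1[F t]? = some (n + 1 + t) := fun t => hf3 t (XS t)
  replace hf4 : ∀ t, sigmaSeq (F t) = sigmaSeq (n + 1 + t) := fun t => hf4 t (XS t)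
  replace hf5 : ∀ t, ∀ y ∈ (XS (t + 1)).1.take (F t), y < n + 1 + t := fun t => hf5 t (XS t)
  replace hf6 : ∀ t, sigmaSeq (n + 1 + t) = sigmaSeq (n + 1) →
      ∀ h, OkSub n h → D (((XS (t + 1)).1.take (F t)).map h) := fun t => hf6 t (XS t)
  clear_value F XS
  have hlen : ∀ t, n + 1 + t ≤ (XS t).1.length := by
    intro t
    induction t with
    | zero => simp [hXS0]
    | succ t ih =>
      have := hf1 t
      have := hf2 t
      omega
  have hpre' : ∀ s t, s ≤ t → (XS s).1 <+: (XS t).1 := by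
    intro s t hst
    induction t, hst using Nat.le_induction with
    | base => exact List.prefix_refl _
    | succ t _ ih => exact ih.trans (hpre t)
  let g : ℕ → ℕ := fun i => (XS i).1.getD i 0
  have hg : ∀ t i, i < (XS t).1.length → (XS t).1[i]? = some (g i) := by
    intro t i hi
    have hi2 : i < (XS i).1.length := by
      have := hlen i
      omega
    have : (XS i).1[i]? = some (g i) := by
      simp only [g, List.getD_eq_getElem?_getD]
      rw [List.getElem?_eq_getElem hi2]
      rfl
    rw [← this]
    rcases le_total t i with h | h
    · obtain ⟨s, hs⟩ := hpre' t i h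
      rw [← hs, List.getElem?_append_left hi]
    · obtain ⟨s, hs⟩ := hpre' i t h
      rw [← hs, List.getElem?_append_left hi2]
  have htake : ∀ t N, N ≤ (XS t).1.length → (XS t).1.take N = (List.range N).map g := by
    intro t N hN
    apply List.ext_getElem
    · simp [hN]
    · intro i h1 h2
      simp only [List.length_map, List.length_range] at h2
      have := hg t i (by omega)
      rw [List.getElem?_eq_getElem (by omega)] at this
      simpa using this
  have hg0 : ∀ i ≤ n, g i = i := by
    intro i hi
    have := hg 0 i (by simp [hXS0]; omega)
    rw [hXS0, List.getElem?_range (by omega)] at this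
    simpa using this.symm
  let f : ℕ → ℕ := fun j => if j ≤ n then j else F (j - (n + 1))
  have hfF : ∀ j, n < j → ∃ t, j = n + 1 + t ∧ f j = F t := by
    intro j hj
    refine ⟨j - (n + 1), by omega, ?_⟩
    simp [f, hj]
  have hf0 : ∀ j ≤ n, f j = j := fun j hj => by simp [f, hj]
  refine ⟨g, f, c, hg0, hf0, ?_, ?_, ?_, ?_, ?_⟩
  · apply strictMono_nat_of_lt_succ
    intro j
    rcases le_or_gt j n with hj | hj
    · rw [hf0 j hj]
      rcases le_or_gt (j + 1) n with hj' | hj'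
      · rw [hf0 _ hj']; omega
      · obtain ⟨t, ht, e⟩ := hfF _ hj'
        have := hlen t
        have := hf1 t
        omega
    · obtain ⟨t, ht, e⟩ := hfF j hj
      obtain ⟨t', ht', e'⟩ := hfF (j + 1) (by omega)
      obtain rfl : t' = t + 1 := by omega
      have := hf2 t
      have := hf1 (t + 1)
      omega
  · intro j
    rcases le_or_gt j n with hj | hj
    · rw [hf0 j hj, hg0 j hj]
    · obtain ⟨t, rfl, e⟩ := hfF j hj
      rw [e]
      have := hg (t + 1) (F t) (hf2 t)
      rw [hf3] at this
      simpa using this.symm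
  · intro j i hij
    rcases le_or_gt j n with hj | hj
    · rw [hf0 j hj] at hij
      rw [hg0 i (by omega)]
      exact hij
    · obtain ⟨t, rfl, e⟩ := hfF j hj
      rw [e] at hij
      apply hf5 t
      rw [htake _ _ (hf2 t).le]
      simp only [List.mem_map, List.mem_range]
      exact ⟨i, hij, rfl⟩
  · intro j
    rcases le_or_gt j n with hj | hj
    · rw [hf0 j hj]
    · obtain ⟨t, rfl, e⟩ := hfF j hj
      rw [e, hf4]
  · intro h hh k hk hs
    obtain ⟨t, rfl, e⟩ := hfF k hk
    have := hf6 t hs h hh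
    rw [htake _ _ (hf2 t).le, List.map_map] at this
    rw [e]
    exact this.1

end Core

section Reps

lemma pRep_of (F : Setoid ℕ) (p e : ℕ → ℕ) (hp : StrictMono p)
    (hr : ∀ x y, F.r x y ↔ e x = e y) (hep : ∀ j, e (p j) = j) (hpe : ∀ x, p (e x) ≤ x) :
    pRep F = p ∧ (classes F).Infinite := by
  have hm : minReps F = Set.range p := by
    ext x
    constructor
    · intro hx
      refine ⟨e x, le_antisymm (hpe x) (hx _ ?_)⟩
      rw [hr, hep]
    · rintro ⟨j, rfl⟩ m hm
      rw [hr, hep] at hm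
      rw [hm]
      exact hpe m
  have hinf : (minReps F).Infinite := by
    rw [hm]
    exact Set.infinite_range_of_injective hp.injective
  constructor
  · have h1 : StrictMono (Nat.nth (· ∈ minReps F)) := Nat.nth_strictMono hinf
    have h2 : Set.range (Nat.nth (· ∈ minReps F)) = Set.range p := by
      rw [← hm]
      exact Nat.range_nth_of_infinite hinf
    exact (StrictMono.range_inj h1 hp).1 h2
  · refine (Set.infinite_range_of_injective (f := fun j => {y | F.r (p j) y}) ?_).mono ?_
    · intro i j hij
      have : p j ∈ {y | F.r (p i) y} := by
        have h : {y | F.r (p i) y} = {y | F.r (p j) y} := hij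
        rw [h]
        exact F.refl _
      have h2 := (hr _ _).1 this
      rwa [hep, hep] at h2
    · rintro _ ⟨j, rfl⟩
      exact ⟨p j, rfl⟩

lemma exists_minRep (E : Setoid ℕ) (x : ℕ) : ∃ y ∈ minReps E, E.r x y ∧ y ≤ x := by
  have hne : {y | E.r x y}.Nonempty := ⟨x, E.refl x⟩
  have h1 : E.r x (sInf {y | E.r x y}) := Nat.sInf_mem hne
  refine ⟨sInf {y | E.r x y}, fun m hm => Nat.sInf_le ?_, h1, Nat.sInf_le (E.refl x)⟩
  exact E.trans h1 hm

lemma minReps_infinite (E : Setoid ℕ) (h : (classes E).Infinite) : (minReps E).Infinite := by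
  intro hf
  apply h
  refine (hf.image (fun x => {y | E.r x y})).subset ?_
  rintro _ ⟨x, rfl⟩
  obtain ⟨y, hy, hxy, -⟩ := exists_minRep E x
  refine ⟨y, hy, ?_⟩
  ext z
  exact ⟨fun hz => E.trans hxy hz, fun hz => E.trans (E.symm hxy) hz⟩

lemma exists_index (E : Setoid ℕ) (h : (classes E).Infinite) :
    StrictMono (pRep E) ∧ (∀ x ∈ minReps E, ∃ j, pRep E j = x) ∧ (∀ j, pRep E j ∈ minReps E) ∧
    ∃ e : ℕ → ℕ, (∀ x y, E.r x y ↔ e x = e y) ∧ (∀ j, e (pRep E j) = j) ∧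
      (∀ x, pRep E (e x) ≤ x) ∧ ∀ x, E.r x (pRep E (e x)) := by
  have hinf := minReps_infinite E h
  have h1 : StrictMono (pRep E) := Nat.nth_strictMono hinf
  have h2 : Set.range (pRep E) = minReps E := Nat.range_nth_of_infinite hinf
  have h3 : ∀ x ∈ minReps E, ∃ j, pRep E j = x := by
    intro x hx
    rw [← h2] at hx
    exact hx
  have h4 : ∀ j, pRep E j ∈ minReps E := by
    intro j
    rw [← h2]
    exact ⟨j, rfl⟩
  refine ⟨h1, h3, h4, ?_⟩
  have : ∀ x, ∃ j, E.r x (pRep E j) ∧ pRep E j ≤ x := by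
    intro x
    obtain ⟨y, hy, h5, h6⟩ := exists_minRep E x
    obtain ⟨j, rfl⟩ := h3 y hy
    exact ⟨j, h5, h6⟩
  choose e he1 he2 using this
  have huniq : ∀ i j, E.r (pRep E i) (pRep E j) → i = j := by
    intro i j hij
    exact h1.injective (le_antisymm (h4 i _ hij) (h4 j _ (E.symm hij)))
  refine ⟨e, fun x y => ⟨fun hxy => ?_, fun hxy => ?_⟩, fun j => ?_, he2, he1⟩
  · exact huniq _ _ (E.trans (E.symm (he1 x)) (E.trans hxy (he1 y)))
  · refine E.trans (he1 x) (E.symm ?_)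
    rw [hxy]
    exact he1 y
  · exact huniq _ _ (E.symm (he1 _))

open Classical in
lemma approx_agree (E G : Setoid ℕ) (hE : (classes E).Infinite) (hG : (classes G).Infinite)
    (m n : ℕ) (h : approx m G = approx n E) : ∀ i ≤ n, pRep G i = pRep E i := by
  have hEi := minReps_infinite E hE
  have hGi := minReps_infinite G hG
  have hB : pRep G m = pRep E n := by
    apply eq_of_forall_lt_iff
    intro x
    have h1 : (x, x) ∈ approx m G ↔ (x, x) ∈ approx n E := by rw [h]
    have e1 : (x, x) ∈ approx m G ↔ x < pRep G m :=
      ⟨fun h => h.1, fun h => ⟨h, h, G.refl x⟩⟩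
    have e2 : (x, x) ∈ approx n E ↔ x < pRep E n :=
      ⟨fun h => h.1, fun h => ⟨h, h, E.refl x⟩⟩
    rw [← e1, ← e2, h1]
  have hrel : ∀ x y, x < pRep E n → y < pRep E n → (G.r x y ↔ E.r x y) := by
    intro x y hx hy
    have h1 : (x, y) ∈ approx m G ↔ (x, y) ∈ approx n E := by rw [h]
    constructor
    · intro hxy
      exact (h1.1 ⟨hB ▸ hx, hB ▸ hy, hxy⟩).2.2
    · intro hxy
      exact (h1.2 ⟨hx, hy, hxy⟩).2.2
  have hmin : ∀ x, x < pRep E n → (x ∈ minReps G ↔ x ∈ minReps E) := by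
    intro x hx
    constructor
    · intro hxG y hy
      by_contra hlt
      exact hlt (hxG y ((hrel x y hx (by omega)).2 hy))
    · intro hxE y hy
      by_contra hlt
      exact hlt (hxE y ((hrel x y hx (by omega)).1 hy))
  have hcount : ∀ N, N ≤ pRep E n →
      Nat.count (· ∈ minReps G) N = Nat.count (· ∈ minReps E) N := by
    intro N
    induction N with
    | zero => simp
    | succ N ih =>
      intro hN
      rw [Nat.count_succ, Nat.count_succ, ih (by omega)]
      simp only [hmin N (by omega)]
  have hcE : ∀ i, Nat.count (· ∈ minReps E) (pRep E i) = i :=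
    fun i => Nat.count_nth_of_infinite hEi i
  have hcG : ∀ i, Nat.count (· ∈ minReps G) (pRep G i) = i :=
    fun i => Nat.count_nth_of_infinite hGi i
  have hmn : m = n := by
    rw [← hcG m, hB, hcount _ le_rfl, hcE]
  subst hmn
  intro i hi
  rcases hi.lt_or_eq with hi | rfl
  · have hlt : pRep E i < pRep E m := Nat.nth_strictMono hEi hi
    have hmem : pRep E i ∈ minReps G :=
      (hmin _ hlt).2 (Nat.nth_mem_of_infinite hEi i)
    have := Nat.nth_count (p := (· ∈ minReps G)) hmem
    rw [hcount _ hlt.le, hcE] at this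
    exact this
  · exact hB

end Reps

/-- **Pigeonhole (axiom A.4) for `𝓔^P_∞`, `P` an infinite partition:** given `E` in
the space, `n < ω`, `a = r_n(E)`, and a set `𝓞` of approximations of length `n+1`,
there is `F ∈ [a,E]` with `r_{n+1}(G) ∈ 𝓞` for all `G ∈ [a,F]`, or
`r_{n+1}(G) ∉ 𝓞` for all `G ∈ [a,F]`. -/
theorem EPaltInfPigeonhole
    (P : ℕ → Set ℕ)
    (hinf : ∀ i, (P i).Infinite)
    (hdisj : ∀ i j, i ≠ j → Disjoint (P i) (P j))
    (hcov : ⋃ i, P i = Set.univ)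
    (hmin : ∀ i j : ℕ, i < j → sInf (P i) < sInf (P j))
    (E : ↥(EPaltInf P)) (n : ℕ)
    (O : Set (Set (ℕ × ℕ)))
    (hO : O ⊆ {b | ∃ G ∈ EPaltInf P, b = approx (n + 1) G}) :
    ∃ F ∈ basicSet (EPaltInf P) (approx n E.1) E,
      (∀ G ∈ basicSet (EPaltInf P) (approx n E.1) F, approx (n + 1) G.1 ∈ O) ∨
      (∀ G ∈ basicSet (EPaltInf P) (approx n E.1) F, approx (n + 1) G.1 ∉ O) := by
  obtain ⟨E, hEinf, hEP⟩ := E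
  obtain ⟨hpE, -, -, e, he1, he2, he3, he4⟩ := exists_index E hEinf
  have he5 : ∀ x k, x < pRep E k → e x < k := fun x k hx =>
    hpE.lt_iff_lt.1 ((he3 x).trans_lt hx)
  obtain ⟨g, f, c, hg0, hf0, hf, hgf, hlt, hfs, hcol⟩ := core n
    (fun L => {q : ℕ × ℕ | q.1 < pRep E L.length ∧ q.2 < pRep E L.length ∧
      L[e q.1]? = L[e q.2]?} ∈ O)
  let F : Setoid ℕ := Setoid.comap (fun x => g (e x)) ⊥
  have hFr : ∀ x y, F.r x y ↔ g (e x) = g (e y) := fun x y => Iff.rfl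
  have hfg : ∀ i, f (g i) ≤ i := fun i => by
    by_contra h
    exact lt_irrefl _ (hlt (g i) i (by omega))
  obtain ⟨hFp, hFinf⟩ := pRep_of F (fun j => pRep E (f j)) (fun x => g (e x)) (hpE.comp hf) hFr
    (fun j => by simp only [he2, hgf])
    (fun x => (hpE.monotone (hfg (e x))).trans (he3 x))
  have hFp' : ∀ j, pRep F j = pRep E (f j) := fun j => by rw [hFp]
  have hFS : F ∈ EPaltInf P := by
    refine ⟨hFinf, fun k => ?_⟩
    rw [hFp', ← hfs]
    exact hEP _
  have hFE : approx n F = approx n E := by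
    ext ⟨x, y⟩
    have e0 : pRep F n = pRep E n := by rw [hFp', hf0 n le_rfl]
    simp only [approx, Set.mem_setOf_eq, e0]
    refine and_congr_right fun hx => and_congr_right fun hy => ?_
    rw [hFr, he1, hg0 _ (he5 _ _ hx).le, hg0 _ (he5 _ _ hy).le]
  refine ⟨⟨F, hFS⟩, ⟨?_, n, hFE⟩, ?_⟩
  · intro a b hab
    rw [hFr, (he1 a b).1 hab]
  have key : ∀ G ∈ basicSet (EPaltInf P) (approx n E) ⟨F, hFS⟩, (approx (n + 1) G.1 ∈ O ↔ c) := by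
    rintro ⟨G, hGinf, hGP⟩ ⟨hGF, m, hm⟩
    simp only at hGF hm ⊢
    obtain ⟨hpG, -, hGm, eG, hG1, hG2, hG3, hG4⟩ := exists_index G hGinf
    have hagree := approx_agree E G hEinf hGinf m n hm
    obtain ⟨-, hFsurj, -, -⟩ := exists_index F hFinf
    obtain ⟨k, hk⟩ : ∃ k, pRep F k = pRep G (n + 1) :=
      hFsurj _ fun y hy => hGm (n + 1) y (hGF _ _ hy)
    have hσ : sigmaSeq k = sigmaSeq (n + 1) := by
      by_contra hne
      exact Set.disjoint_left.1 (hdisj _ _ hne) (hFS.2 k) (hk ▸ hGP (n + 1))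
    have hkE : pRep E (f k) = pRep G (n + 1) := by rw [← hk, hFp']
    have hnk : n < k := by
      have h1 : pRep G n < pRep G (n + 1) := hpG (Nat.lt_succ_self n)
      rw [hagree n le_rfl, ← hkE] at h1
      have h2 := hpE.lt_iff_lt.1 h1
      rw [← hf0 n le_rfl] at h2
      exact hf.lt_iff_lt.1 h2
    let h : ℕ → Fin (n + 1) := fun j => Fin.ofNat (n + 1) (eG (pRep E (f j)))
    have hh : OkSub n h := by
      intro i
      have hi : (i : ℕ) ≤ n := Nat.lt_succ_iff.1 i.2
      simp only [h]
      rw [hf0 _ hi, ← hagree _ hi, hG2]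
      simp
    have hc := hcol h hh k hnk hσ
    rw [← hc]
    have heq : approx (n + 1) G = {q : ℕ × ℕ |
        q.1 < pRep E ((List.range (f k)).map (fun i => h (g i))).length ∧
        q.2 < pRep E ((List.range (f k)).map (fun i => h (g i))).length ∧
        ((List.range (f k)).map (fun i => h (g i)))[e q.1]? =
          ((List.range (f k)).map (fun i => h (g i)))[e q.2]?} := by
      ext ⟨x, y⟩
      simp only [approx, Set.mem_setOf_eq, List.length_map, List.length_range, hkE]
      refine and_congr_right fun hx => and_congr_right fun hy => ?_
      have hval : ∀ z, z < pRep G (n + 1) →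
          ((List.range (f k)).map (fun i => h (g i)))[e z]? = some (h (g (e z))) ∧
          ((h (g (e z))) : ℕ) = eG z := by
        intro z hz
        constructor
        · have : e z < f k := he5 _ _ (hkE ▸ hz)
          simp [this]
        · have hz1 : eG z < n + 1 := hpG.lt_iff_lt.1 ((hG3 z).trans_lt hz)
          have hz2 : eG (pRep E (f (g (e z)))) = eG z := by
            rw [← hG1]
            apply hGF
            rw [hFr, he2, hgf]
          simp only [h, hz2]
          simp [Nat.mod_eq_of_lt hz1]
      rw [(hval x hx).1, (hval y hy).1, hG1, ← (hval x hx).2, ← (hval y hy).2,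
        Option.some_inj, Fin.ext_iff]
    rw [heq]
  by_cases hc : c
  · exact Or.inl fun G hG => (key G hG).2 hc
  · exact Or.inr fun G hG hO' => hc ((key G hG).1 hO')

end DualRamsey
end
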